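/- arXiv:2201.01382 — 2 statements merged into one kernel-verified Lean document; each statement's English description precedes it below -/
import Mathlib

section
/- Let ν be a probability measure on ℝ^d whose support is contained in a ball of radius R, and let μ = γ_d ⋆ ν be the convolution of the standard Gaussian measure with ν. Then there exists a map T : ℝ^d → ℝ^d which is Lipschitz with Lipschitz constant at most e^{R²/2} and which pushes forward γ_d to μ, i.e. T_*γ_d = μ. -/
open MeasureTheory Real Set
open scoped ENNReal NNReal

noncomputable section

/-- `ℝ^d` as a Euclidean space. -/
abbrev Ed (d : ℕ) : Type := EuclideanSpace ℝ (Fin d)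

/-- The standard Gaussian measure `γ_d` on `ℝ^d` (mean 0, identity covariance). -/
def stdGaussian (d : ℕ) : Measure (Ed d) :=
  (volume : Measure (Ed d)).withDensity
    fun x => ENNReal.ofReal ((2 * π) ^ (-(d : ℝ) / 2) * Real.exp (-‖x‖ ^ 2 / 2))

/-- The centered Gaussian measure on `ℝ^d` with covariance `a·Id`. -/
def gaussianCov (d : ℕ) (a : ℝ) : Measure (Ed d) :=
  (volume : Measure (Ed d)).withDensity
    fun x => ENNReal.ofReal ((2 * π * a) ^ (-(d : ℝ) / 2) * Real.exp (-‖x‖ ^ 2 / (2 * a)))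

/-- The Hessian quadratic form of `f` at `x`, evaluated at the direction `(w, w)`. -/
def hessQF {d : ℕ} (f : Ed d → ℝ) (x w : Ed d) : ℝ :=
  fderiv ℝ (fun y => fderiv ℝ f y w) x w

/-- The (topological) support of a measure on `ℝ^d`. -/
def msupport {d : ℕ} (μ : Measure (Ed d)) : Set (Ed d) :=
  {x | ∀ U : Set (Ed d), IsOpen U → x ∈ U → μ U ≠ 0}

/-- The convolution `μ ⋆ ν` of two measures on `ℝ^d`: the law of `X + Y`
with `X ∼ μ`, `Y ∼ ν` independent. -/
def mconv {d : ℕ} (μ ν : Measure (Ed d)) : Measure (Ed d) :=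
  Measure.map (fun p : Ed d × Ed d => p.1 + p.2) (μ.prod ν)

/-- `μ` is `κ`-log-concave with density `p` w.r.t. Lebesgue measure: its support is
convex and `−∇² log p(x) ⪰ κ·Id` for `μ`-a.e. `x`. -/
def KLogConcaveD {d : ℕ} (κ : ℝ) (μ : Measure (Ed d)) (p : Ed d → ℝ) : Prop :=
  μ = (volume : Measure (Ed d)).withDensity (fun x => ENNReal.ofReal (p x)) ∧
    Convex ℝ (msupport μ) ∧
    ∀ᵐ x ∂μ, ∀ w : Ed d, hessQF (fun y => Real.log (p y)) x w ≤ -(κ * ‖w‖ ^ 2)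

/-- `μ` is `κ`-log-concave. -/
def KLogConcave {d : ℕ} (κ : ℝ) (μ : Measure (Ed d)) : Prop :=
  ∃ p : Ed d → ℝ, KLogConcaveD κ μ p

/-- `μ` is `β`-semi-log-convex with density `p` w.r.t. Lebesgue measure:
`−∇² log p(x) ⪯ β·Id` for every `x`. -/
def SemiLogConvexD {d : ℕ} (β : ℝ) (μ : Measure (Ed d)) (p : Ed d → ℝ) : Prop :=
  μ = (volume : Measure (Ed d)).withDensity (fun x => ENNReal.ofReal (p x)) ∧
    ∀ x w : Ed d, -(β * ‖w‖ ^ 2) ≤ hessQF (fun y => Real.log (p y)) x w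

/-- `μ` is `β`-semi-log-convex. -/
def SemiLogConvex {d : ℕ} (β : ℝ) (μ : Measure (Ed d)) : Prop :=
  ∃ p : Ed d → ℝ, SemiLogConvexD β μ p

/-- The Ornstein–Uhlenbeck semigroup:
`Q_t g(x) = ∫ g(e^{−t}x + √(1−e^{−2t})·y) dγ_d(y)`. -/
def OU {d : ℕ} (t : ℝ) (f : Ed d → ℝ) (x : Ed d) : ℝ :=
  ∫ y, f (Real.exp (-t) • x + Real.sqrt (1 - Real.exp (-2 * t)) • y) ∂(stdGaussian d)

/-- The heat semigroup: `P_t f(x) = ∫ f(x + √t·y) dγ_d(y)`. -/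
def heatSG {d : ℕ} (t : ℝ) (f : Ed d → ℝ) (x : Ed d) : ℝ :=
  ∫ y, f (x + Real.sqrt t • y) ∂(stdGaussian d)

/-- The entropy of `g` relative to `μ`:
`Ent_μ(g) = ∫ log(g)·g dμ − log(∫ g dμ)·∫ g dμ`. -/
def entRel {d : ℕ} (μ : Measure (Ed d)) (g : Ed d → ℝ) : ℝ :=
  ∫ x, Real.log (g x) * g x ∂μ - Real.log (∫ x, g x ∂μ) * ∫ x, g x ∂μ

/-- The variance of `g` under `μ`. -/
def varOf {d : ℕ} (μ : Measure (Ed d)) (g : Ed d → ℝ) : ℝ :=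
  ∫ x, g x ^ 2 ∂μ - (∫ x, g x ∂μ) ^ 2

/-- The distribution function of a density `p`: `F(λ) = Vol({x : p(x) ≥ λ})`. -/
def distFun {d : ℕ} (p : Ed d → ℝ) (l : ℝ) : ℝ≥0∞ :=
  (volume : Measure (Ed d)) {x | l ≤ p x}

/-- The density of the standard Gaussian measure w.r.t. Lebesgue measure. -/
def gaussPdf (d : ℕ) (x : Ed d) : ℝ :=
  (2 * π) ^ (-(d : ℝ) / 2) * Real.exp (-‖x‖ ^ 2 / 2)

/-- The `q`-Rényi entropy of a density `p`: `h_q = log(∫ p^q)/(1−q)`. -/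
def renyi {d : ℕ} (p : Ed d → ℝ) (q : ℝ) : ℝ :=
  Real.log (∫ x, p x ^ q ∂(volume : Measure (Ed d))) / (1 - q)

def Quad {d : ℕ} {F : Type*} [NormedAddCommGroup F] [NormedSpace ℝ F]
    (f : Ed d → F) (M L : ℝ) : Prop :=
  ∃ D : Ed d → (Ed d →L[ℝ] F), (∀ x, ‖D x‖ ≤ M) ∧
    ∀ x w, ‖f (x + w) - f x - D x w‖ ≤ L * ‖w‖ ^ 2

lemma hasFDerivAt_of_quad {d : ℕ} {F : Type*} [NormedAddCommGroup F] [NormedSpace ℝ F]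
    {f : Ed d → F} {x : Ed d} {L : ℝ} {A : Ed d →L[ℝ] F}
    (h : ∀ w, ‖f (x + w) - f x - A w‖ ≤ L * ‖w‖ ^ 2) : HasFDerivAt f A x := by
  rw [hasFDerivAt_iff_isLittleO_nhds_zero]
  have h1 : (fun w : Ed d => f (x + w) - f x - A w) =O[nhds 0] (fun w => ‖w‖ ^ 2) := by
    apply Asymptotics.IsBigO.of_bound L
    filter_upwards with w
    simpa using h w
  exact h1.trans_isLittleO (Asymptotics.isLittleO_norm_pow_id one_lt_two)

lemma Quad.lip {d : ℕ} {F : Type*} [NormedAddCommGroup F] [NormedSpace ℝ F]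
    {f : Ed d → F} {M L : ℝ} (h : Quad f M L) (x y : Ed d) : ‖f y - f x‖ ≤ M * ‖y - x‖ := by
  obtain ⟨D, h1, h2⟩ := h
  exact convex_univ.norm_image_sub_le_of_norm_hasFDerivWithin_le
    (fun z _ => (hasFDerivAt_of_quad (h2 z)).hasFDerivWithinAt) (fun z _ => h1 z)
    (mem_univ _) (mem_univ _)

lemma Quad.continuous {d : ℕ} {F : Type*} [NormedAddCommGroup F] [NormedSpace ℝ F]
    {f : Ed d → F} {M L : ℝ} (h : Quad f M L) : Continuous f := by
  obtain ⟨D, h1, h2⟩ := h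
  exact continuous_iff_continuousAt.2 fun z => (hasFDerivAt_of_quad (h2 z)).continuousAt

lemma Quad.nonneg {d : ℕ} {F : Type*} [NormedAddCommGroup F] [NormedSpace ℝ F]
    {f : Ed d → F} {M L : ℝ} (h : Quad f M L) : 0 ≤ M := by
  obtain ⟨D, h1, h2⟩ := h
  exact (norm_nonneg _).trans (h1 0)

lemma Quad.mono {d : ℕ} {F : Type*} [NormedAddCommGroup F] [NormedSpace ℝ F]
    {f : Ed d → F} {M L M' L' : ℝ} (h : Quad f M L) (hM : M ≤ M') (hL : L ≤ L') :
    Quad f M' L' := by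
  obtain ⟨D, h1, h2⟩ := h
  exact ⟨D, fun x => (h1 x).trans hM, fun x w => (h2 x w).trans (by gcongr)⟩

lemma Quad.comp {d : ℕ} {F : Type*} [NormedAddCommGroup F] [NormedSpace ℝ F]
    {g : Ed d → F} {f : Ed d → Ed d} {M L a l : ℝ} (hL : 0 ≤ L)
    (hg : Quad g M L) (hf : Quad f a l) :
    Quad (fun x => g (f x)) (M * a) (M * l + L * a ^ 2) := by
  have hlip := hf.lip
  have hM := hg.nonneg
  obtain ⟨D, h1, h2⟩ := hg
  obtain ⟨A, h3, h4⟩ := hf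
  refine ⟨fun x => (D (f x)).comp (A x), fun x => ?_, fun x w => ?_⟩
  · exact (ContinuousLinearMap.opNorm_comp_le _ _).trans
      (mul_le_mul (h1 _) (h3 _) (norm_nonneg _) hM)
  · have e : g (f (x + w)) - g (f x) - ((D (f x)).comp (A x)) w
        = (g (f x + (f (x + w) - f x)) - g (f x) - D (f x) (f (x + w) - f x))
          + D (f x) (f (x + w) - f x - A x w) := by
      simp
    rw [e]
    have b1 := h2 (f x) (f (x + w) - f x)
    have b2 : ‖D (f x) (f (x + w) - f x - A x w)‖ ≤ M * (l * ‖w‖ ^ 2) :=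
      (ContinuousLinearMap.le_opNorm _ _).trans
        (mul_le_mul (h1 _) (h4 _ _) (norm_nonneg _) hM)
    have b3 : ‖f (x + w) - f x‖ ≤ a * ‖w‖ := by simpa using hlip x (x + w)
    have b4 : ‖f (x + w) - f x‖ ^ 2 ≤ (a * ‖w‖) ^ 2 := by gcongr
    have b5 := mul_le_mul_of_nonneg_left b4 hL
    refine (norm_add_le _ _).trans ?_
    nlinarith

lemma integ_of_bdd {d : ℕ} {F : Type*} [NormedAddCommGroup F] [NormedSpace ℝ F]
    (ρ : Measure (Ed d)) [IsFiniteMeasure ρ] (C : ℝ) {g : Ed d → F}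
    [SecondCountableTopology F]
    (hg : Continuous g) (hb : ∀ᵐ y ∂ρ, ‖g y‖ ≤ C) : Integrable g ρ :=
  Integrable.of_bound hg.aestronglyMeasurable C hb

def covOp {d : ℕ} (ρ : Measure (Ed d)) (w : Ed d) : Ed d :=
  ∫ y, inner ℝ w y • (y - ∫ z, z ∂ρ) ∂ρ

lemma norm_mean_le {d : ℕ} {R : ℝ} (ρ : Measure (Ed d)) [IsProbabilityMeasure ρ]
    (hρ : ∀ᵐ y ∂ρ, ‖y‖ ≤ R) : ‖∫ z, z ∂ρ‖ ≤ R := by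
  simpa using norm_integral_le_of_norm_le_const hρ

lemma integ_id {d : ℕ} {R : ℝ} (ρ : Measure (Ed d)) [IsProbabilityMeasure ρ]
    (hρ : ∀ᵐ y ∂ρ, ‖y‖ ≤ R) : Integrable (fun y : Ed d => y) ρ :=
  integ_of_bdd ρ R continuous_id hρ

lemma integ_cov {d : ℕ} {R : ℝ} (ρ : Measure (Ed d)) [IsProbabilityMeasure ρ]
    (hρ : ∀ᵐ y ∂ρ, ‖y‖ ≤ R) (w m : Ed d) :
    Integrable (fun y : Ed d => inner ℝ w y • (y - m)) ρ := by
  refine integ_of_bdd ρ ((‖w‖ * R) * (R + ‖m‖)) (by fun_prop) ?_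
  filter_upwards [hρ] with y hy
  rw [norm_smul]
  have := norm_inner_le_norm (𝕜 := ℝ) w y
  have h2 := norm_sub_le y m
  have h0 : 0 ≤ R := (norm_nonneg _).trans hy
  gcongr
  · exact this.trans (by gcongr)
  · linarith

lemma norm_covOp_le {d : ℕ} {R : ℝ} (ρ : Measure (Ed d)) [IsProbabilityMeasure ρ]
    (hρ : ∀ᵐ y ∂ρ, ‖y‖ ≤ R) (w : Ed d) : ‖covOp ρ w‖ ≤ R ^ 2 * ‖w‖ := by
  have hR : 0 ≤ R := by
    obtain ⟨y, hy⟩ := hρ.exists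
    exact (norm_nonneg _).trans hy
  set m := ∫ z, z ∂ρ with hm
  have hid := integ_id ρ hρ
  have hmR : ‖m‖ ≤ R := norm_mean_le ρ hρ
  have hsub : Integrable (fun y => y - m) ρ := hid.sub (integrable_const m)
  have hc0 : ∫ y, (y - m) ∂ρ = 0 := by
    rw [integral_sub hid (integrable_const _)]; simp [hm]
  have hinn : Integrable (fun y => inner ℝ w y) ρ := hid.const_inner w
  have hinn2 : Integrable (fun y => (inner ℝ w y) ^ 2) ρ := by
    refine integ_of_bdd ρ ((‖w‖ * R) ^ 2) (by fun_prop) ?_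
    filter_upwards [hρ] with y hy
    rw [norm_pow]
    have := norm_inner_le_norm (𝕜 := ℝ) w y
    gcongr
    exact this.trans (by gcongr)
  have e1 : covOp ρ w = ∫ y, inner ℝ w (y - m) • y ∂ρ := by
    have : ∀ y : Ed d, inner ℝ w (y - m) • y
        = inner ℝ w y • (y - m) - inner ℝ w m • (y - m) + inner ℝ w (y - m) • m := by
      intro y
      rw [inner_sub_right]; module
    simp_rw [this]
    have i3 : Integrable (fun y => inner ℝ w (y - m)) ρ :=
      (hid.sub (integrable_const m)).const_inner w
    rw [integral_add, integral_sub (integ_cov ρ hρ w m), integral_smul, hc0, integral_smul_const,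
      integral_inner hsub w, hc0]
    · simp [covOp, ← hm]
    · exact hsub.smul (inner ℝ w m)
    · exact (integ_cov ρ hρ w m).sub (hsub.smul (inner ℝ w m))
    · exact i3.smul_const _
  have hvar : ∫ y, (inner ℝ w (y - m)) ^ 2 ∂ρ ≤ (R * ‖w‖) ^ 2 := by
    have e : ∀ y : Ed d, (inner ℝ w (y - m)) ^ 2
        = (inner ℝ w y) ^ 2 - 2 * inner ℝ w m * inner ℝ w y + (inner ℝ w m) ^ 2 := by
      intro y; rw [inner_sub_right]; ring
    simp_rw [e]
    have i5 : Integrable (fun y => (inner ℝ w y) ^ 2 - 2 * inner ℝ w m * inner ℝ w y) ρ :=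
      hinn2.sub (hinn.const_mul _)
    rw [integral_add i5 (integrable_const _),
      integral_sub hinn2 (hinn.const_mul _), integral_const_mul, integral_inner hid w, ← hm]
    have b : ∫ y, (inner ℝ w y) ^ 2 ∂ρ ≤ (R * ‖w‖) ^ 2 := by
      have : ∫ y, (inner ℝ w y) ^ 2 ∂ρ ≤ ∫ y, (R * ‖w‖) ^ 2 ∂ρ := by
        refine integral_mono_ae hinn2 (integrable_const _) ?_
        filter_upwards [hρ] with y hy
        have := abs_real_inner_le_norm w y
        refine sq_le_sq' ?_ ?_
        · nlinarith [abs_le.1 this, norm_nonneg w]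
        · nlinarith [abs_le.1 this, norm_nonneg w]
      simpa using this
    simp
    nlinarith [sq_nonneg (inner ℝ w m)]
  have i3 : Integrable (fun y => inner ℝ w (y - m)) ρ :=
      (hid.sub (integrable_const m)).const_inner w
  have i4 : Integrable (fun y => (inner ℝ w (y - m)) ^ 2) ρ := by
    have e : ∀ y : Ed d, (inner ℝ w (y - m)) ^ 2
        = (inner ℝ w y) ^ 2 - 2 * inner ℝ w m * inner ℝ w y + (inner ℝ w m) ^ 2 := by
      intro y; rw [inner_sub_right]; ring
    simp_rw [e]
    exact (hinn2.sub (hinn.const_mul _)).add (integrable_const _)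
  have hL1 : ∫ y, |inner ℝ w (y - m)| ∂ρ ≤ R * ‖w‖ := by
    rcases (mul_nonneg hR (norm_nonneg w)).eq_or_lt with h0 | h0
    · have : ∫ y, |inner ℝ w (y - m)| ∂ρ ≤ ∫ y, (0 : ℝ) ∂ρ := by
        refine integral_mono_ae i3.abs (integrable_const _) ?_
        filter_upwards [hρ] with y hy
        have h1 := abs_real_inner_le_norm w (y - m)
        have h2 := norm_sub_le y m
        show |inner ℝ w (y - m)| ≤ 0
        nlinarith [norm_nonneg w]
      rw [← h0]; simpa using this
    · have : ∫ y, (2 * (R * ‖w‖)) * |inner ℝ w (y - m)| ∂ρ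
          ≤ ∫ y, ((inner ℝ w (y - m)) ^ 2 + (R * ‖w‖) ^ 2) ∂ρ := by
        refine integral_mono (i3.abs.const_mul _) (i4.add (integrable_const _)) ?_
        intro y
        show (2 * (R * ‖w‖)) * |inner ℝ w (y - m)| ≤ (inner ℝ w (y - m)) ^ 2 + (R * ‖w‖) ^ 2
        rw [← sq_abs (inner ℝ w (y - m))]
        nlinarith [sq_nonneg (|inner ℝ w (y - m)| - R * ‖w‖)]
      rw [integral_const_mul, integral_add i4 (integrable_const _)] at this
      simp at this
      have h5 : (R * ‖w‖) * ∫ y, |inner ℝ w (y - m)| ∂ρ ≤ (R * ‖w‖) * (R * ‖w‖) := by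
        nlinarith
      exact le_of_mul_le_mul_left h5 h0
  rw [e1]
  calc ‖∫ y, inner ℝ w (y - m) • y ∂ρ‖ ≤ ∫ y, |inner ℝ w (y - m)| * R ∂ρ := by
        refine norm_integral_le_of_norm_le (i3.abs.mul_const _) ?_
        filter_upwards [hρ] with y hy
        rw [norm_smul, Real.norm_eq_abs]
        gcongr
    _ ≤ R ^ 2 * ‖w‖ := by
        rw [integral_mul_const]; nlinarith

def covL {d : ℕ} {R : ℝ} (ρ : Measure (Ed d)) [IsProbabilityMeasure ρ]
    (hρ : ∀ᵐ y ∂ρ, ‖y‖ ≤ R) : Ed d →L[ℝ] Ed d :=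
  LinearMap.mkContinuous
    { toFun := covOp ρ
      map_add' := by
        intro a b
        simp only [covOp, inner_add_left, add_smul]
        exact integral_add (integ_cov ρ hρ a _) (integ_cov ρ hρ b _)
      map_smul' := by
        intro c a
        simp only [covOp, real_inner_smul_left, mul_smul, RingHom.id_apply]
        exact integral_smul c _ } (R ^ 2) (norm_covOp_le ρ hρ)

lemma tilt_exp_integ {d : ℕ} {R : ℝ} (ρ : Measure (Ed d)) [IsProbabilityMeasure ρ]
    (hρ : ∀ᵐ y ∂ρ, ‖y‖ ≤ R) (a : ℝ) (w : Ed d) :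
    Integrable (fun y : Ed d => exp (inner ℝ w y - a * ‖y‖ ^ 2)) ρ := by
  refine integ_of_bdd ρ (exp (‖w‖ * R + |a| * R ^ 2)) (by fun_prop) ?_
  filter_upwards [hρ] with y hy
  rw [Real.norm_eq_abs, abs_exp, exp_le_exp]
  have h1 := abs_real_inner_le_norm w y
  have h2 : |a * ‖y‖ ^ 2| ≤ |a| * R ^ 2 := by
    rw [abs_mul, abs_of_nonneg (sq_nonneg ‖y‖)]; gcongr
  have h3 : ‖w‖ * ‖y‖ ≤ ‖w‖ * R := by gcongr
  linarith [abs_le.1 h1, abs_le.1 h2]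

lemma tilt_expand {d : ℕ} {R : ℝ} (ρ : Measure (Ed d)) [IsProbabilityMeasure ρ]
    (hρ : ∀ᵐ y ∂ρ, ‖y‖ ≤ R) (w : Ed d) :
    ‖(∫ y, y ∂(ρ.tilted (fun y => inner ℝ w y))) - (∫ y, y ∂ρ) - covOp ρ w‖
      ≤ 12 * R ^ 3 * ‖w‖ ^ 2 := by
  have hR : 0 ≤ R := by
    obtain ⟨y, hy⟩ := hρ.exists
    exact (norm_nonneg _).trans hy
  have hcov := norm_covOp_le ρ hρ w
  have hexp : Integrable (fun y : Ed d => exp (inner ℝ w y)) ρ := by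
    simpa using tilt_exp_integ ρ hρ 0 w
  have hid := integ_id ρ hρ
  have hmR : ‖∫ z, z ∂ρ‖ ≤ R := norm_mean_le ρ hρ
  by_cases hw : R * ‖w‖ ≤ 1
  · rw [integral_tilted]
    set Z := ∫ y, exp (inner ℝ w y) ∂ρ with hZ
    have hip : ∀ y : Ed d, ‖y‖ ≤ R → |inner ℝ w y| ≤ R * ‖w‖ := by
      intro y hy
      have := abs_real_inner_le_norm w y
      nlinarith [norm_nonneg w]
    have hZpos : exp (-1) ≤ Z := by
      have : ∫ y, exp (-1) ∂ρ ≤ Z := by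
        refine integral_mono_ae (integrable_const _) hexp ?_
        filter_upwards [hρ] with y hy
        have := hip y hy
        exact exp_le_exp.2 (by linarith [abs_le.1 this])
      simpa using this
    have hZ0 : 0 < Z := lt_of_lt_of_le (exp_pos _) hZpos
    have hZi : Z⁻¹ ≤ 3 := by
      have h1 : Z⁻¹ ≤ (exp (-1))⁻¹ := inv_anti₀ (exp_pos _) hZpos
      rw [exp_neg, inv_inv] at h1
      have := Real.exp_one_lt_d9
      linarith
    have hZ1 : |1 - Z| ≤ 2 * (R * ‖w‖) := by
      have e : 1 - Z = ∫ y, (1 - exp (inner ℝ w y)) ∂ρ := by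
        rw [integral_sub (integrable_const _) hexp]; simp [hZ]
      rw [e, ← Real.norm_eq_abs]
      refine (norm_integral_le_of_norm_le_const (C := 2 * (R * ‖w‖)) ?_).trans (by simp)
      filter_upwards [hρ] with y hy
      have h1 := hip y hy
      have h2 := Real.abs_exp_sub_one_le (h1.trans hw)
      rw [norm_sub_rev, Real.norm_eq_abs]
      linarith
    set m := ∫ z, z ∂ρ with hm
    have hsub : Integrable (fun y => y - m) ρ := hid.sub (integrable_const m)
    have hc0 : ∫ y, (y - m) ∂ρ = 0 := by
      rw [integral_sub hid (integrable_const _)]; simp [hm]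
    have hexpy : Integrable (fun y : Ed d => exp (inner ℝ w y) • (y - m)) ρ := by
      refine integ_of_bdd ρ (exp 1 * (2 * R)) (by fun_prop) ?_
      filter_upwards [hρ] with y hy
      rw [norm_smul, Real.norm_eq_abs, abs_exp]
      have := hip y hy
      have h2 := norm_sub_le y m
      gcongr
      · linarith [abs_le.1 this]
      · linarith
    set r := ∫ y, (exp (inner ℝ w y) - 1 - inner ℝ w y) • (y - m) ∂ρ with hr
    have hrb : ‖r‖ ≤ 2 * R ^ 3 * ‖w‖ ^ 2 := by
      refine (norm_integral_le_of_norm_le_const (C := 2 * R ^ 3 * ‖w‖ ^ 2) ?_).trans (by simp)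
      filter_upwards [hρ] with y hy
      rw [norm_smul, Real.norm_eq_abs]
      have h1 := hip y hy
      have h2 := Real.abs_exp_sub_one_sub_id_le (h1.trans hw)
      have h3 := norm_sub_le y m
      have h4 : (inner ℝ w y) ^ 2 ≤ (R * ‖w‖) ^ 2 := sq_le_sq' (abs_le.1 h1).1 (abs_le.1 h1).2
      calc _ ≤ (R * ‖w‖) ^ 2 * (2 * R) := by
            gcongr
            · exact h2.trans h4
            · linarith
        _ = _ := by ring
    have key : ∫ y, exp (inner ℝ w y) • (y - m) ∂ρ = covOp ρ w + r := by
      have e : ∀ y : Ed d, (exp (inner ℝ w y) - 1 - inner ℝ w y) • (y - m)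
          = exp (inner ℝ w y) • (y - m) - (y - m) - inner ℝ w y • (y - m) := by
        intro y; module
      have i1 : Integrable (fun y : Ed d => exp (inner ℝ w y) • (y - m) - (y - m)) ρ :=
        hexpy.sub hsub
      simp_rw [e] at hr
      rw [integral_sub i1 (integ_cov ρ hρ w m), integral_sub hexpy hsub, hc0] at hr
      rw [hr, covOp, ← hm]; abel
    have e2 : ∫ y, (exp (inner ℝ w y) / Z) • y ∂ρ - m = Z⁻¹ • (covOp ρ w + r) := by
      rw [← key, ← integral_smul]
      have e3 : ∀ y : Ed d, Z⁻¹ • exp (inner ℝ w y) • (y - m)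
          = (exp (inner ℝ w y) / Z) • y - (exp (inner ℝ w y) / Z) • m := by
        intro y; rw [smul_smul, smul_sub, div_eq_inv_mul]
      simp_rw [e3]
      have i2 : Integrable (fun y : Ed d => (exp (inner ℝ w y) / Z) • m) ρ :=
        (hexp.div_const Z).smul_const m
      have i1 : Integrable (fun y : Ed d => (exp (inner ℝ w y) / Z) • y) ρ := by
        have := (hexpy.smul Z⁻¹).add i2
        refine this.congr (ae_of_all _ fun y => ?_)
        simp only [Pi.add_apply, Pi.smul_apply]
        rw [e3]; abel
      rw [integral_sub i1 i2, integral_smul_const, integral_div, ← hZ, div_self hZ0.ne', one_smul]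
    rw [e2]
    have e4 : Z⁻¹ • (covOp ρ w + r) - covOp ρ w = (Z⁻¹ * (1 - Z)) • covOp ρ w + Z⁻¹ • r := by
      rw [mul_sub, mul_one, inv_mul_cancel₀ hZ0.ne']; module
    rw [e4]
    refine (norm_add_le _ _).trans ?_
    rw [norm_smul, norm_smul, norm_mul, Real.norm_eq_abs (1 - Z), norm_inv, Real.norm_eq_abs,
      abs_of_pos hZ0]
    have b1 : Z⁻¹ * |1 - Z| * ‖covOp ρ w‖ ≤ 3 * (2 * (R * ‖w‖)) * (R ^ 2 * ‖w‖) := by gcongr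
    have b2 : Z⁻¹ * ‖r‖ ≤ 3 * (2 * R ^ 3 * ‖w‖ ^ 2) := by gcongr
    nlinarith
  · push Not at hw
    have : IsProbabilityMeasure (ρ.tilted (fun y => inner ℝ w y)) :=
      isProbabilityMeasure_tilted hexp
    have h1 : ‖∫ y, y ∂(ρ.tilted (fun y => inner ℝ w y))‖ ≤ R :=
      norm_mean_le _ ((tilted_absolutelyContinuous _ _).ae_le hρ)
    have h2 := norm_sub_le ((∫ y, y ∂(ρ.tilted (fun y => inner ℝ w y))) - (∫ y, y ∂ρ)) (covOp ρ w)
    have h3 := norm_sub_le (∫ y, y ∂(ρ.tilted (fun y => inner ℝ w y))) (∫ y, y ∂ρ)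
    have h4 : 1 ≤ (R * ‖w‖) ^ 2 := by nlinarith
    have h5 : R * 1 ≤ R * (R * ‖w‖) ^ 2 := by gcongr
    have h6 : R * (R * ‖w‖) ≤ R * (R * ‖w‖) ^ 2 := by gcongr; nlinarith
    nlinarith

def vf {d : ℕ} (ν : Measure (Ed d)) (s : ℝ) (x : Ed d) : Ed d :=
  ∫ y, y ∂(ν.tilted (fun y => inner ℝ (s • x) y - s ^ 2 / 2 * ‖y‖ ^ 2))

lemma tilt_prob {d : ℕ} {R : ℝ} (ν : Measure (Ed d)) [IsProbabilityMeasure ν]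
    (hν : ∀ᵐ y ∂ν, ‖y‖ ≤ R) (s : ℝ) (x : Ed d) :
    IsProbabilityMeasure (ν.tilted (fun y => inner ℝ (s • x) y - s ^ 2 / 2 * ‖y‖ ^ 2)) :=
  isProbabilityMeasure_tilted (tilt_exp_integ ν hν _ _)

lemma tilt_bd {d : ℕ} {R : ℝ} (ν : Measure (Ed d))
    (hν : ∀ᵐ y ∂ν, ‖y‖ ≤ R) (f : Ed d → ℝ) : ∀ᵐ y ∂(ν.tilted f), ‖y‖ ≤ R :=
  (tilted_absolutelyContinuous _ _).ae_le hν

lemma norm_vf_le {d : ℕ} {R : ℝ} (ν : Measure (Ed d)) [IsProbabilityMeasure ν]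
    (hν : ∀ᵐ y ∂ν, ‖y‖ ≤ R) (s : ℝ) (x : Ed d) : ‖vf ν s x‖ ≤ R := by
  have := tilt_prob ν hν s x
  exact norm_mean_le _ (tilt_bd ν hν _)

lemma quad_step {d : ℕ} {R : ℝ} (ν : Measure (Ed d)) [IsProbabilityMeasure ν]
    (hν : ∀ᵐ y ∂ν, ‖y‖ ≤ R) {s h : ℝ} (hs : 0 ≤ s) (hh : 0 ≤ h) :
    Quad (fun x => x + h • vf ν s x) (1 + h * (s * R ^ 2)) (h * (12 * R ^ 3 * s ^ 2)) := by
  have hp := fun x => tilt_prob ν hν s x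
  have hb := fun x : Ed d => tilt_bd ν hν (fun y => inner ℝ (s • x) y - s ^ 2 / 2 * ‖y‖ ^ 2)
  refine ⟨fun x => ContinuousLinearMap.id ℝ (Ed d) + h • s • covL _ (hb x),
    fun x => ?_, fun x w => ?_⟩
  · refine (norm_add_le _ _).trans ?_
    rw [norm_smul, norm_smul, Real.norm_of_nonneg hs, Real.norm_of_nonneg hh]
    gcongr
    · exact ContinuousLinearMap.norm_id_le
    · exact LinearMap.mkContinuous_norm_le _ (sq_nonneg R) _
  · have e : vf ν s (x + w) = ∫ y, y ∂((ν.tilted (fun y => inner ℝ (s • x) y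
        - s ^ 2 / 2 * ‖y‖ ^ 2)).tilted (fun y => inner ℝ (s • w) y)) := by
      rw [tilted_tilted (tilt_exp_integ ν hν _ _)]
      unfold vf
      congr 2
      ext y
      simp only [Pi.add_apply, smul_add, inner_add_left]; ring
    have key := tilt_expand _ (hb x) (s • w)
    rw [← e] at key
    have hc : covOp (ν.tilted (fun y => inner ℝ (s • x) y - s ^ 2 / 2 * ‖y‖ ^ 2)) (s • w)
      = s • covL _ (hb x) w := ((covL _ (hb x)).map_smul s w)
    rw [hc] at key
    have e2 : x + w + h • vf ν s (x + w) - (x + h • vf ν s x)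
        - (ContinuousLinearMap.id ℝ (Ed d) + h • s • covL _ (hb x)) w
        = h • (vf ν s (x + w) - vf ν s x - s • covL _ (hb x) w) := by
      simp only [add_apply, ContinuousLinearMap.id_apply,
        smul_apply, smul_sub]
      abel
    rw [e2, norm_smul, Real.norm_of_nonneg hh]
    rw [norm_smul, Real.norm_of_nonneg hs] at key
    calc _ ≤ h * (12 * R ^ 3 * (s * ‖w‖) ^ 2) := by gcongr; exact key
      _ = _ := by ring

instance stdGaussian_prob (d : ℕ) : IsProbabilityMeasure (stdGaussian d) := by
  constructor
  have hI : ∫ v : Ed d, rexp (-(1 / 2) * ‖v‖ ^ 2) = (2 * π) ^ ((d : ℝ) / 2) := by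
    rw [GaussianFourier.integral_rexp_neg_mul_sq_norm (by norm_num)]
    simp [mul_comm]
  have hint : Integrable (fun v : Ed d => rexp (-(1 / 2) * ‖v‖ ^ 2)) := by
    by_contra h
    rw [integral_undef h] at hI
    have : (0 : ℝ) < (2 * π) ^ ((d : ℝ) / 2) := by positivity
    linarith
  have e : ∀ x : Ed d, (2 * π) ^ (-(d : ℝ) / 2) * Real.exp (-‖x‖ ^ 2 / 2)
      = (2 * π) ^ (-(d : ℝ) / 2) * rexp (-(1 / 2) * ‖x‖ ^ 2) := by
    intro x; congr 2; ring
  rw [stdGaussian, withDensity_apply _ MeasurableSet.univ, Measure.restrict_univ]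
  simp_rw [e]
  rw [← ofReal_integral_eq_lintegral_ofReal (hint.const_mul _)
    (ae_of_all _ fun x => by positivity), integral_const_mul, hI, ← Real.rpow_add (by positivity)]
  simp [neg_div]

def wt {d : ℕ} (s : ℝ) (x y : Ed d) : ℝ := exp (inner ℝ (s • x) y - s ^ 2 / 2 * ‖y‖ ^ 2)

lemma wt_meas {d : ℕ} (s : ℝ) : Measurable (fun p : Ed d × Ed d => wt s p.1 p.2) := by
  unfold wt
  exact (by fun_prop : Continuous (fun p : Ed d × Ed d =>
    exp (inner ℝ (s • p.1) p.2 - s ^ 2 / 2 * ‖p.2‖ ^ 2))).measurable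

lemma lintegral_stdG {d : ℕ} (f : Ed d → ℝ≥0∞) (hf : Measurable f) :
    ∫⁻ x, f x ∂(stdGaussian d) = ∫⁻ x, ENNReal.ofReal ((2 * π) ^ (-(d : ℝ) / 2) *
      Real.exp (-‖x‖ ^ 2 / 2)) * f x := by
  have hm : Measurable (fun x : Ed d =>
      ENNReal.ofReal ((2 * π) ^ (-(d : ℝ) / 2) * Real.exp (-‖x‖ ^ 2 / 2))) := by fun_prop
  exact lintegral_withDensity_eq_lintegral_mul _ hm hf

lemma shift_gauss {d : ℕ} (s : ℝ) (y : Ed d) (f : Ed d → ℝ≥0∞) (hf : Measurable f) :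
    ∫⁻ x, f (x + s • y) ∂(stdGaussian d)
      = ∫⁻ x, ENNReal.ofReal (wt s x y) * f x ∂(stdGaussian d) := by
  have hw : Measurable (fun x : Ed d => wt s x y) := by
    unfold wt
    exact (by fun_prop : Continuous (fun x : Ed d =>
      exp (inner ℝ (s • x) y - s ^ 2 / 2 * ‖y‖ ^ 2))).measurable
  have hf1 : Measurable (fun x : Ed d => f (x + s • y)) := hf.comp (measurable_add_const _)
  have hf2 : Measurable (fun x : Ed d => ENNReal.ofReal (wt s x y) * f x) :=
    hw.ennreal_ofReal.mul hf
  rw [lintegral_stdG _ hf1, lintegral_stdG _ hf2]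
  have h1 := lintegral_add_right_eq_self (μ := (volume : Measure (Ed d)))
    (fun z : Ed d => ENNReal.ofReal ((2 * π) ^ (-(d : ℝ) / 2) *
      Real.exp (-‖z - s • y‖ ^ 2 / 2)) * f z) (s • y)
  simp only [add_sub_cancel_right] at h1
  rw [h1]
  refine lintegral_congr fun z => ?_
  rw [← mul_assoc, ← ENNReal.ofReal_mul (by positivity), mul_assoc, wt, ← Real.exp_add]
  congr 4
  rw [norm_sub_sq_real, real_inner_smul_left, real_inner_smul_right, norm_smul, mul_pow,
    Real.norm_eq_abs, sq_abs]
  ring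

lemma shear {d : ℕ} (ν : Measure (Ed d)) [IsProbabilityMeasure ν] (s : ℝ) :
    Measure.map (fun p : Ed d × Ed d => (p.1 + s • p.2, p.2)) ((stdGaussian d).prod ν)
      = ((stdGaussian d).prod ν).withDensity (fun p => ENNReal.ofReal (wt s p.1 p.2)) := by
  have hw := (wt_meas (d := d) s).ennreal_ofReal
  refine Measure.ext_of_lintegral _ fun f hf => ?_
  rw [lintegral_map hf (by fun_prop), lintegral_withDensity_eq_lintegral_mul _ hw hf,
    lintegral_prod_symm' _ (by fun_prop), lintegral_prod_symm' _ (by fun_prop)]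
  refine lintegral_congr fun y => ?_
  exact shift_gauss s y (fun x => f (x, y)) (by fun_prop)

lemma integ_shear {d : ℕ} (ν : Measure (Ed d)) [IsProbabilityMeasure ν] (s : ℝ)
    (H : Ed d × Ed d → ℂ) (hH : Measurable H) :
    ∫ p, H (p.1 + s • p.2, p.2) ∂((stdGaussian d).prod ν)
      = ∫ p, wt s p.1 p.2 • H p ∂((stdGaussian d).prod ν) := by
  have hw := (wt_meas (d := d) s).ennreal_ofReal
  have h1 := integral_map (μ := (stdGaussian d).prod ν)
    (φ := fun p : Ed d × Ed d => (p.1 + s • p.2, p.2)) (by fun_prop) (f := H)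
    hH.aestronglyMeasurable
  rw [← h1, shear, integral_withDensity_eq_integral_toReal_smul hw (by simp)]
  refine integral_congr_ae (ae_of_all _ fun p => ?_)
  simp only
  rw [ENNReal.toReal_ofReal]
  exact (exp_pos _).le

lemma integrable_shear {d : ℕ} (ν : Measure (Ed d)) [IsProbabilityMeasure ν] (s : ℝ)
    (H : Ed d × Ed d → ℂ) (hH : Measurable H) (C : ℝ)
    (hC : ∀ᵐ p ∂((stdGaussian d).prod ν), ‖H p‖ ≤ C) :
    Integrable (fun p => wt s p.1 p.2 • H p) ((stdGaussian d).prod ν) := by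
  have hw := (wt_meas (d := d) s).ennreal_ofReal
  have : IsFiniteMeasure
      (((stdGaussian d).prod ν).withDensity (fun p => ENNReal.ofReal (wt s p.1 p.2))) := by
    rw [← shear]; infer_instance
  have h1 : Integrable H
      (((stdGaussian d).prod ν).withDensity (fun p => ENNReal.ofReal (wt s p.1 p.2))) :=
    Integrable.of_bound hH.aestronglyMeasurable C
      ((withDensity_absolutelyContinuous _ _).ae_le hC)
  rw [integrable_withDensity_iff_integrable_smul' hw (by simp)] at h1
  refine h1.congr (ae_of_all _ fun p => ?_)
  simp only
  rw [ENNReal.toReal_ofReal]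
  exact (exp_pos _).le

lemma clm_meas {d : ℕ} (D : Ed d → (Ed d →L[ℝ] ℂ)) (hD : Measurable D) :
    Measurable (fun p : Ed d × Ed d => D p.1 p.2) := by
  have h : Continuous (fun q : (Ed d →L[ℝ] ℂ) × Ed d => q.1 q.2) :=
    isBoundedBilinearMap_apply.continuous
  exact h.measurable.comp ((hD.comp measurable_fst).prodMk measurable_snd)

lemma bd_snd {d : ℕ} {R : ℝ} (ν : Measure (Ed d)) [IsProbabilityMeasure ν]
    (hν : ∀ᵐ y ∂ν, ‖y‖ ≤ R) : ∀ᵐ p ∂((stdGaussian d).prod ν), ‖p.2‖ ≤ R :=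
  Measure.quasiMeasurePreserving_snd.ae hν

lemma vf_meas {d : ℕ} {R : ℝ} (ν : Measure (Ed d)) [IsProbabilityMeasure ν]
    (hν : ∀ᵐ y ∂ν, ‖y‖ ≤ R) {s : ℝ} (hs : 0 ≤ s) : Measurable (vf ν s) := by
  have h := (quad_step ν hν hs zero_le_one).continuous.sub continuous_id
  refine Continuous.measurable (h.congr fun x => ?_)
  simp

lemma tower {d : ℕ} {R N : ℝ} (ν : Measure (Ed d)) [IsProbabilityMeasure ν]
    (hν : ∀ᵐ y ∂ν, ‖y‖ ≤ R) {s : ℝ} (hs : 0 ≤ s)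
    (D : Ed d → (Ed d →L[ℝ] ℂ)) (hD : Measurable D) (hN : ∀ x, ‖D x‖ ≤ N) :
    ∫ p, D (p.1 + s • p.2) p.2 ∂((stdGaussian d).prod ν)
      = ∫ p, D (p.1 + s • p.2) (vf ν s (p.1 + s • p.2)) ∂((stdGaussian d).prod ν) := by
  have hv := vf_meas ν hν hs
  have m1 := clm_meas D hD
  have m2 : Measurable (fun p : Ed d × Ed d => D p.1 (vf ν s p.1)) :=
    m1.comp (measurable_fst.prodMk (hv.comp measurable_fst))
  have hN0 : 0 ≤ N := (norm_nonneg _).trans (hN 0)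
  rw [integ_shear ν s (fun p => D p.1 p.2) m1, integ_shear ν s (fun p => D p.1 (vf ν s p.1)) m2]
  have i1 := integrable_shear ν s (fun p => D p.1 p.2) m1 (N * R) (by
    filter_upwards [bd_snd ν hν] with p hp
    exact (ContinuousLinearMap.le_opNorm _ _).trans
      (mul_le_mul (hN _) hp (norm_nonneg _) hN0))
  have i2 := integrable_shear ν s (fun p => D p.1 (vf ν s p.1)) m2 (N * R) (ae_of_all _ fun p => by
    exact (ContinuousLinearMap.le_opNorm _ _).trans
      (mul_le_mul (hN _) (norm_vf_le ν hν _ _) (norm_nonneg _) hN0))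
  rw [integral_prod _ i1, integral_prod _ i2]
  refine integral_congr_ae (ae_of_all _ fun x => ?_)
  have hwi : Integrable (fun y => wt s x y) ν := tilt_exp_integ ν hν _ _
  have hZ : 0 < ∫ y, wt s x y ∂ν := integral_exp_pos hwi
  have hwy : Integrable (fun y => wt s x y • y) ν := by
    have := (integrable_tilted_iff (E := Ed d) hwi (fun y => y)).1 (by
      have := tilt_prob ν hν s x
      exact integ_id _ (tilt_bd ν hν _))
    exact this
  have hvf : vf ν s x = (∫ y, wt s x y ∂ν)⁻¹ • ∫ y, wt s x y • y ∂ν := by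
    unfold vf
    rw [integral_tilted, ← integral_smul]
    refine integral_congr_ae (ae_of_all _ fun y => ?_)
    simp only [smul_smul]
    rw [div_eq_inv_mul]; rfl
  simp only
  have e1 : ∀ y, wt s x y • (D x) y = D x (wt s x y • y) := fun y => ((D x).map_smul _ _).symm
  simp_rw [e1]
  rw [ContinuousLinearMap.integral_comp_comm _ hwy, integral_smul_const, ← (D x).map_smul, hvf,
    smul_smul, mul_inv_cancel₀ hZ.ne', one_smul]

def muS {d : ℕ} (ν : Measure (Ed d)) (s : ℝ) : Measure (Ed d) :=
  Measure.map (fun p : Ed d × Ed d => p.1 + s • p.2) ((stdGaussian d).prod ν)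

lemma one_step {d : ℕ} {R N B : ℝ} (ν : Measure (Ed d)) [IsProbabilityMeasure ν]
    (hν : ∀ᵐ y ∂ν, ‖y‖ ≤ R) {s h : ℝ} (hs : 0 ≤ s) (hh : 0 ≤ h)
    (φ : Ed d → ℂ) (hφ : Quad φ N N) (hB : ∀ x, ‖φ x‖ ≤ B) :
    ‖∫ z, φ (z + h • vf ν s z) ∂(muS ν s) - ∫ z, φ z ∂(muS ν (s + h))‖
      ≤ 2 * N * R ^ 2 * h ^ 2 := by
  have hc := hφ.continuous
  have hN0 := hφ.nonneg
  have hv := vf_meas ν hν hs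
  obtain ⟨D, h1, h2⟩ := hφ
  have hDf : D = fderiv ℝ φ := funext fun x => (hasFDerivAt_of_quad (h2 x)).fderiv.symm
  have hDm : Measurable D := by rw [hDf]; exact measurable_fderiv ℝ φ
  have mz : Measurable (fun p : Ed d × Ed d => p.1 + s • p.2) := by fun_prop
  have mφ : Measurable (fun z => φ (z + h • vf ν s z)) :=
    hc.measurable.comp (measurable_id.add (hv.const_smul h))
  unfold muS
  rw [integral_map mz.aemeasurable mφ.aestronglyMeasurable,
    integral_map (by fun_prop) hc.measurable.aestronglyMeasurable]
  have m1 : Measurable (fun p : Ed d × Ed d => D (p.1 + s • p.2) p.2) :=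
    (clm_meas D hDm).comp (mz.prodMk measurable_snd)
  have m2 : Measurable (fun p : Ed d × Ed d => D (p.1 + s • p.2) (vf ν s (p.1 + s • p.2))) :=
    (clm_meas D hDm).comp (mz.prodMk (hv.comp mz))
  have i1 : Integrable (fun p : Ed d × Ed d => D (p.1 + s • p.2) p.2)
      ((stdGaussian d).prod ν) := Integrable.of_bound m1.aestronglyMeasurable (N * R) (by
    filter_upwards [bd_snd ν hν] with p hp
    exact (ContinuousLinearMap.le_opNorm _ _).trans
      (mul_le_mul (h1 _) hp (norm_nonneg _) hN0))
  have i2 : Integrable (fun p : Ed d × Ed d => D (p.1 + s • p.2) (vf ν s (p.1 + s • p.2)))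
      ((stdGaussian d).prod ν) :=
    Integrable.of_bound m2.aestronglyMeasurable (N * R) (ae_of_all _ fun p => by
      exact (ContinuousLinearMap.le_opNorm _ _).trans
        (mul_le_mul (h1 _) (norm_vf_le ν hν _ _) (norm_nonneg _) hN0))
  have i3 : Integrable (fun p : Ed d × Ed d => φ (p.1 + s • p.2 + h • vf ν s (p.1 + s • p.2)))
      ((stdGaussian d).prod ν) :=
    Integrable.of_bound (mφ.comp mz).aestronglyMeasurable B (ae_of_all _ fun p => hB _)
  have i4 : Integrable (fun p : Ed d × Ed d => φ (p.1 + (s + h) • p.2))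
      ((stdGaussian d).prod ν) :=
    Integrable.of_bound (hc.measurable.comp (by fun_prop)).aestronglyMeasurable B
      (ae_of_all _ fun p => hB _)
  have htow := tower ν hν hs D hDm h1
  have e : ∫ p : Ed d × Ed d, φ (p.1 + s • p.2 + h • vf ν s (p.1 + s • p.2))
        ∂((stdGaussian d).prod ν)
      - ∫ p : Ed d × Ed d, φ (p.1 + (s + h) • p.2) ∂((stdGaussian d).prod ν)
      = ∫ p : Ed d × Ed d, ((φ (p.1 + s • p.2 + h • vf ν s (p.1 + s • p.2))
          - φ (p.1 + (s + h) • p.2)) - h • (D (p.1 + s • p.2) (vf ν s (p.1 + s • p.2))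
          - D (p.1 + s • p.2) p.2)) ∂((stdGaussian d).prod ν) := by
    have i34 : Integrable (fun p : Ed d × Ed d =>
        φ (p.1 + s • p.2 + h • vf ν s (p.1 + s • p.2)) - φ (p.1 + (s + h) • p.2))
        ((stdGaussian d).prod ν) := i3.sub i4
    have i21 : Integrable (fun p : Ed d × Ed d => (D (p.1 + s • p.2) (vf ν s (p.1 + s • p.2))
          - D (p.1 + s • p.2) p.2)) ((stdGaussian d).prod ν) := i2.sub i1
    have i21h : Integrable (fun p : Ed d × Ed d =>
          h • (D (p.1 + s • p.2) (vf ν s (p.1 + s • p.2))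
          - D (p.1 + s • p.2) p.2)) ((stdGaussian d).prod ν) := i21.smul h
    rw [integral_sub i34 i21h, integral_sub i3 i4, integral_smul, integral_sub i2 i1, htow]
    simp
  rw [e]
  refine (norm_integral_le_of_norm_le_const (C := 2 * N * R ^ 2 * h ^ 2) ?_).trans (by simp)
  filter_upwards [bd_snd ν hν] with p hp
  have hz : p.1 + (s + h) • p.2 = (p.1 + s • p.2) + h • p.2 := by module
  rw [hz]
  set z := p.1 + s • p.2
  have a1 := h2 z (h • vf ν s z)
  have a2 := h2 z (h • p.2)
  have a3 := norm_vf_le ν hν s z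
  have e3 : φ (z + h • vf ν s z) - φ (z + h • p.2) - h • (D z (vf ν s z) - D z p.2)
      = (φ (z + h • vf ν s z) - φ z - D z (h • vf ν s z))
        - (φ (z + h • p.2) - φ z - D z (h • p.2)) := by
    rw [(D z).map_smul, (D z).map_smul, smul_sub]; abel
  rw [e3]
  refine (norm_sub_le _ _).trans ?_
  rw [norm_smul, Real.norm_of_nonneg hh] at a1 a2
  have b1 : N * (h * ‖vf ν s z‖) ^ 2 ≤ N * (h * R) ^ 2 := by gcongr
  have b2 : N * (h * ‖p.2‖) ^ 2 ≤ N * (h * R) ^ 2 := by gcongr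
  nlinarith

def eul {d : ℕ} (ν : Measure (Ed d)) (h : ℝ) : ℕ → Ed d → Ed d
  | 0 => fun x => x
  | k + 1 => fun x => eul ν h k x + h • vf ν (k * h) (eul ν h k x)

lemma muS_zero {d : ℕ} (ν : Measure (Ed d)) [IsProbabilityMeasure ν] :
    muS ν 0 = stdGaussian d := by
  unfold muS
  simp only [zero_smul, add_zero]
  exact Measure.fst_prod

lemma eul_err {d : ℕ} {R : ℝ} (ν : Measure (Ed d)) [IsProbabilityMeasure ν]
    (hν : ∀ᵐ y ∂ν, ‖y‖ ≤ R) (hR : 0 ≤ R) {h : ℝ} (hh : 0 ≤ h) (h1 : h ≤ 1) (k : ℕ) :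
    k * h ≤ 1 → ∀ (N B : ℝ) (φ : Ed d → ℂ), Quad φ N N → (∀ x, ‖φ x‖ ≤ B) →
    ‖∫ x, φ (eul ν h k x) ∂(stdGaussian d) - ∫ z, φ z ∂(muS ν (k * h))‖
      ≤ k * (2 * N * R ^ 2 * h ^ 2) * (1 + h * (2 * R ^ 2 + R ^ 4 + 12 * R ^ 3)) ^ k := by
  induction k with
  | zero => intro _ N B φ _ _; simp [eul, muS_zero]
  | succ k ih =>
    intro hk N B φ hφ hB
    have hN0 := hφ.nonneg
    push_cast at hk
    have hs0 : 0 ≤ (k : ℝ) * h := by positivity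
    have hs1 : (k : ℝ) * h ≤ 1 := by nlinarith
    set s := (k : ℝ) * h with hs
    set c := 2 * R ^ 2 + R ^ 4 + 12 * R ^ 3 with hc
    have hc0 : 0 ≤ c := by positivity
    have hstep := quad_step ν hν hs0 hh
    have hq := hφ.comp hN0 hstep
    have hsR : s * R ^ 2 ≤ R ^ 2 := by nlinarith [sq_nonneg R]
    have hs2 : s ^ 2 ≤ 1 := by nlinarith
    have hcomp : 12 * R ^ 3 * s ^ 2 ≤ 12 * R ^ 3 := by
      have : 0 ≤ 12 * R ^ 3 := by positivity
      nlinarith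
    have hq2 : Quad (fun x => φ (x + h • vf ν s x)) (N * (1 + h * c)) (N * (1 + h * c)) := by
      refine hq.mono ?_ ?_
      · gcongr
        have : 0 ≤ R ^ 2 + R ^ 4 + 12 * R ^ 3 := by positivity
        linarith
      · rw [← mul_add]
        refine mul_le_mul_of_nonneg_left ?_ hN0
        have a1 : h * (12 * R ^ 3 * s ^ 2) ≤ h * (12 * R ^ 3) := by gcongr
        have a2 : (1 + h * (s * R ^ 2)) ^ 2 ≤ (1 + h * R ^ 2) ^ 2 := by gcongr
        have a3 : h ^ 2 * R ^ 4 ≤ h * R ^ 4 := by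
          have : h ^ 2 ≤ h := by nlinarith
          gcongr
        rw [hc]
        linarith [a1, a2, a3]
    have IH := ih hs1 _ B _ hq2 (fun x => hB _)
    have os := one_step ν hν hs0 hh φ hφ hB
    have e : ((k + 1 : ℕ) : ℝ) * h = s + h := by push_cast; ring
    rw [e]
    have tri := norm_add_le
      (∫ x, φ (eul ν h (k + 1) x) ∂(stdGaussian d) - ∫ z, φ (z + h • vf ν s z) ∂(muS ν s))
      (∫ z, φ (z + h • vf ν s z) ∂(muS ν s) - ∫ z, φ z ∂(muS ν (s + h)))
    rw [sub_add_sub_cancel] at tri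
    refine tri.trans ?_
    have IH' : ‖∫ x, φ (eul ν h (k + 1) x) ∂(stdGaussian d)
        - ∫ z, φ (z + h • vf ν s z) ∂(muS ν s)‖
        ≤ k * (2 * (N * (1 + h * c)) * R ^ 2 * h ^ 2) * (1 + h * c) ^ k := IH
    have hp : 1 ≤ (1 + h * c) ^ (k + 1) := one_le_pow₀ (by nlinarith)
    have q0 : 0 ≤ 2 * N * R ^ 2 * h ^ 2 := by positivity
    have q1 := mul_le_mul_of_nonneg_left hp q0
    push_cast
    calc _ ≤ k * (2 * (N * (1 + h * c)) * R ^ 2 * h ^ 2) * (1 + h * c) ^ k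
          + 2 * N * R ^ 2 * h ^ 2 := add_le_add IH' os
      _ ≤ k * (2 * (N * (1 + h * c)) * R ^ 2 * h ^ 2) * (1 + h * c) ^ k
          + 2 * N * R ^ 2 * h ^ 2 * (1 + h * c) ^ (k + 1) := by linarith
      _ = _ := by ring

lemma eul_lip {d : ℕ} {R : ℝ} (ν : Measure (Ed d)) [IsProbabilityMeasure ν]
    (hν : ∀ᵐ y ∂ν, ‖y‖ ≤ R) {h : ℝ} (hh : 0 ≤ h) (k : ℕ) (x y : Ed d) :
    ‖eul ν h k y - eul ν h k x‖ ≤ exp (R ^ 2 * (k * h) ^ 2 / 2) * ‖y - x‖ := by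
  induction k with
  | zero => simp [eul]
  | succ k ih =>
    have hs0 : 0 ≤ (k : ℝ) * h := by positivity
    have a := (quad_step ν hν hs0 hh).lip (eul ν h k x) (eul ν h k y)
    have b : 1 + h * (k * h * R ^ 2) ≤ exp (h * (k * h * R ^ 2)) := by
      have := Real.add_one_le_exp (h * (k * h * R ^ 2)); linarith
    calc _ ≤ (1 + h * (k * h * R ^ 2)) * ‖eul ν h k y - eul ν h k x‖ := a
      _ ≤ exp (h * (k * h * R ^ 2)) * (exp (R ^ 2 * (k * h) ^ 2 / 2) * ‖y - x‖) := by gcongr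
      _ = exp (h * (k * h * R ^ 2) + R ^ 2 * (k * h) ^ 2 / 2) * ‖y - x‖ := by
        rw [Real.exp_add]; ring
      _ ≤ _ := by
        gcongr
        push_cast
        nlinarith [sq_nonneg (R * h)]

lemma eul_bd {d : ℕ} {R : ℝ} (ν : Measure (Ed d)) [IsProbabilityMeasure ν]
    (hν : ∀ᵐ y ∂ν, ‖y‖ ≤ R) {h : ℝ} (hh : 0 ≤ h) (k : ℕ) (x : Ed d) :
    ‖eul ν h k x - x‖ ≤ k * h * R := by
  induction k with
  | zero => simp [eul]
  | succ k ih =>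
    have a := norm_vf_le ν hν (k * h) (eul ν h k x)
    have e : eul ν h (k + 1) x - x = (eul ν h k x - x) + h • vf ν (k * h) (eul ν h k x) := by
      simp only [eul]; abel
    rw [e]
    refine (norm_add_le _ _).trans ?_
    rw [norm_smul, Real.norm_of_nonneg hh]
    push_cast
    nlinarith

lemma quad_char {d : ℕ} (t : Ed d) :
    ∃ N : ℝ, Quad (fun x : Ed d => Complex.exp ((inner ℝ x t : ℝ) * Complex.I)) N N := by
  let D : Ed d → (Ed d →L[ℝ] ℂ) := fun x =>
    (innerSL ℝ t).smulRight (Complex.exp ((inner ℝ x t : ℝ) * Complex.I) * Complex.I)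
  refine ⟨‖t‖ + 3 * ‖t‖ ^ 2, Quad.mono (M := ‖t‖) (L := 3 * ‖t‖ ^ 2) ⟨D, fun x => ?_, fun x w => ?_⟩
    (by nlinarith [sq_nonneg ‖t‖]) (by linarith [norm_nonneg t])⟩
  · simp only [D, ContinuousLinearMap.norm_smulRight_apply, norm_mul, Complex.norm_I, mul_one,
      Complex.norm_exp_ofReal_mul_I, innerSL_apply_norm, le_refl]
  · set b : ℝ := inner ℝ w t with hb
    have e : Complex.exp ((inner ℝ (x + w) t : ℝ) * Complex.I)
        - Complex.exp ((inner ℝ x t : ℝ) * Complex.I) - D x w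
        = Complex.exp ((inner ℝ x t : ℝ) * Complex.I) *
          (Complex.exp (b * Complex.I) - 1 - b * Complex.I) := by
      simp only [D, ContinuousLinearMap.smulRight_apply, innerSL_apply_apply]
      rw [inner_add_left, real_inner_comm w t, ← hb]
      push_cast
      rw [add_mul, Complex.exp_add, Complex.real_smul]
      ring
    have hbb : |b| ≤ ‖w‖ * ‖t‖ := abs_real_inner_le_norm w t
    have hb2 : b ^ 2 ≤ (‖w‖ * ‖t‖) ^ 2 := by
      rw [← sq_abs]; gcongr
    have hn : ‖(b : ℂ) * Complex.I‖ = |b| := by simp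
    simp only at e ⊢
    rw [e, norm_mul, Complex.norm_exp_ofReal_mul_I, one_mul]
    have : ‖Complex.exp (b * Complex.I) - 1 - b * Complex.I‖ ≤ 3 * b ^ 2 := by
      by_cases h1 : |b| ≤ 1
      · have := Complex.norm_exp_sub_one_sub_id_le (x := b * Complex.I) (by rw [hn]; exact h1)
        rw [hn, sq_abs] at this
        nlinarith [sq_nonneg b]
      · push Not at h1
        have a1 := norm_sub_le (Complex.exp (b * Complex.I) - 1) (b * Complex.I)
        have a2 := norm_sub_le (Complex.exp (b * Complex.I)) 1
        rw [Complex.norm_exp_ofReal_mul_I, norm_one] at a2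
        rw [hn] at a1
        rw [← sq_abs]
        nlinarith
    nlinarith

lemma ae_bd {d : ℕ} {R : ℝ} (ν : Measure (Ed d))
    (hν : msupport ν ⊆ Metric.closedBall 0 R) : ∀ᵐ y ∂ν, ‖y‖ ≤ R := by
  have h : ν (msupport ν)ᶜ = 0 := by
    refine measure_null_of_locally_null _ fun x hx => ?_
    simp only [msupport, mem_compl_iff, mem_ofPred_eq, not_forall, not_not] at hx
    obtain ⟨U, hU, hxU, h0⟩ := hx
    exact ⟨U, mem_nhdsWithin_of_mem_nhds (hU.mem_nhds hxU), h0⟩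
  have h2 : ∀ᵐ y ∂ν, y ∈ msupport ν := h
  filter_upwards [h2] with y hy
  simpa using hν hy

lemma exists_sub_lim {d : ℕ} {R : ℝ} {K : ℝ≥0} (F : ℕ → Ed d → Ed d)
    (hF : ∀ n, LipschitzWith K (F n)) (hb : ∀ n x, ‖F n x - x‖ ≤ R) :
    ∃ (T : Ed d → Ed d) (g : ℕ → ℕ), StrictMono g ∧
      ∀ x, Filter.Tendsto (fun n => F (g n) x) Filter.atTop (nhds (T x)) := by
  let u := TopologicalSpace.denseSeq (Ed d)
  have hcomp : IsCompact (Set.pi univ (fun k : ℕ => Metric.closedBall (u k) R)) :=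
    isCompact_univ_pi fun k => isCompact_closedBall _ _
  obtain ⟨a, -, g, hg, hlim⟩ := hcomp.tendsto_subseq
    (x := fun n k => F n (u k)) (fun n k _ => by
      rw [Metric.mem_closedBall, dist_eq_norm]; exact hb n (u k))
  rw [tendsto_pi_nhds] at hlim
  have hC : ∀ x, CauchySeq (fun n => F (g n) x) := by
    intro x
    rw [Metric.cauchySeq_iff']
    intro ε hε
    obtain ⟨k, hk⟩ : ∃ k, dist x (u k) < ε / (3 * (K + 1)) := by
      obtain ⟨y, hy, k, rfl⟩ := Metric.dense_iff.1 (TopologicalSpace.denseRange_denseSeq (Ed d)) x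
        (ε / (3 * (K + 1))) (by positivity)
      exact ⟨k, by rw [dist_comm]; exact hy⟩
    have hK : K * dist x (u k) < ε / 3 := by
      rw [lt_div_iff₀ (by positivity)] at hk
      have := dist_nonneg (x := x) (y := u k)
      nlinarith
    obtain ⟨n0, hn0⟩ := Metric.cauchySeq_iff'.1 (hlim k).cauchySeq (ε / 3) (by positivity)
    refine ⟨n0, fun n hn => ?_⟩
    have h1 := hn0 n hn
    simp only [Function.comp] at h1
    have h2 := (hF (g n)).dist_le_mul x (u k)
    have h3 := (hF (g n0)).dist_le_mul x (u k)
    rw [dist_comm] at h3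
    have h4 := dist_triangle4 (F (g n) x) (F (g n) (u k)) (F (g n0) (u k)) (F (g n0) x)
    linarith
  choose T hT using fun x => cauchySeq_tendsto_of_complete (hC x)
  exact ⟨T, g, hg, hT⟩

/-- If `ν` is supported in a ball of radius `R` and `μ = γ_d ⋆ ν`, then
there is an `e^{R²/2}`-Lipschitz map pushing the standard Gaussian forward to `μ`. -/
theorem transport_from_gaussian_mixture
    (d : ℕ) (R : ℝ) (ν : Measure (Ed d)) [IsProbabilityMeasure ν]
    (hν : msupport ν ⊆ Metric.closedBall 0 R) :
    ∃ T : Ed d → Ed d,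
      LipschitzWith (Real.toNNReal (Real.exp (R ^ 2 / 2))) T ∧
      Measure.map T (stdGaussian d) = mconv (stdGaussian d) ν := by
  have hae := ae_bd ν hν
  have hR : 0 ≤ R := by
    obtain ⟨y, hy⟩ := hae.exists
    exact (norm_nonneg _).trans hy
  have hL0 : 0 ≤ Real.exp (R ^ 2 / 2) := (Real.exp_pos _).le
  let F : ℕ → Ed d → Ed d := fun n => eul ν (1 / (n + 1 : ℝ)) (n + 1)
  have hh : ∀ n : ℕ, 0 ≤ 1 / (n + 1 : ℝ) := fun n => by positivity
  have hkh : ∀ n : ℕ, ((n + 1 : ℕ) : ℝ) * (1 / (n + 1 : ℝ)) = 1 := fun n => by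
    push_cast; field_simp
  have hF1 : ∀ n x y, ‖F n y - F n x‖ ≤ Real.exp (R ^ 2 / 2) * ‖y - x‖ := by
    intro n x y
    have := eul_lip ν hae (hh n) (n + 1) x y
    rw [hkh, one_pow, mul_one] at this
    exact this
  have hF2 : ∀ n x, ‖F n x - x‖ ≤ R := by
    intro n x
    have := eul_bd ν hae (hh n) (n + 1) x
    rw [hkh, one_mul] at this
    exact this
  have hFl : ∀ n, LipschitzWith (Real.toNNReal (Real.exp (R ^ 2 / 2))) (F n) := by
    intro n
    refine LipschitzWith.of_dist_le_mul fun x y => ?_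
    rw [Real.coe_toNNReal _ hL0, dist_eq_norm, dist_eq_norm]
    exact hF1 n y x
  obtain ⟨T, g, hg, hT⟩ := exists_sub_lim F hFl hF2
  have hTl : LipschitzWith (Real.toNNReal (Real.exp (R ^ 2 / 2))) T := by
    refine LipschitzWith.of_dist_le_mul fun x y => ?_
    exact le_of_tendsto ((hT x).dist (hT y))
      (Filter.Eventually.of_forall fun n => (hFl (g n)).dist_le_mul x y)
  refine ⟨T, hTl, ?_⟩
  have hmc : mconv (stdGaussian d) ν = muS ν 1 := by simp [mconv, muS]
  rw [hmc]
  have hp1 : IsProbabilityMeasure (Measure.map T (stdGaussian d)) :=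
    Measure.isProbabilityMeasure_map hTl.continuous.measurable.aemeasurable
  have hp2 : IsProbabilityMeasure (muS ν 1) :=
    Measure.isProbabilityMeasure_map (by fun_prop)
  refine Measure.ext_of_charFun (funext fun t => ?_)
  rw [charFun_apply, charFun_apply]
  obtain ⟨N, hN⟩ := quad_char t
  have hc := hN.continuous
  have hB : ∀ x : Ed d, ‖Complex.exp ((inner ℝ x t : ℝ) * Complex.I)‖ ≤ 1 := fun x => by
    rw [Complex.norm_exp_ofReal_mul_I]
  rw [integral_map hTl.continuous.measurable.aemeasurable hc.measurable.aestronglyMeasurable]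
  have lim1 : Filter.Tendsto
      (fun n => ∫ x, Complex.exp ((inner ℝ (F (g n) x) t : ℝ) * Complex.I) ∂(stdGaussian d))
      Filter.atTop
      (nhds (∫ x, Complex.exp ((inner ℝ (T x) t : ℝ) * Complex.I) ∂(stdGaussian d))) := by
    refine tendsto_integral_of_dominated_convergence (fun _ => (1 : ℝ)) (fun n => ?_)
      (integrable_const _) (fun n => ae_of_all _ fun x => hB _) (ae_of_all _ fun x => ?_)
    · exact (hc.comp (hFl (g n)).continuous).aestronglyMeasurable
    · exact (hc.tendsto (T x)).comp (hT x)
  have lim2 : Filter.Tendsto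
      (fun n => ∫ x, Complex.exp ((inner ℝ (F n x) t : ℝ) * Complex.I) ∂(stdGaussian d))
      Filter.atTop
      (nhds (∫ x, Complex.exp ((inner ℝ x t : ℝ) * Complex.I) ∂(muS ν 1))) := by
    rw [tendsto_iff_norm_sub_tendsto_zero]
    set c := 2 * R ^ 2 + R ^ 4 + 12 * R ^ 3 with hcdef
    have hc0 : 0 ≤ c := by positivity
    have hN0 := hN.nonneg
    refine squeeze_zero (g := fun n : ℕ => (2 * N * R ^ 2 * Real.exp c) * (1 / (n + 1 : ℝ)))
      (fun n => norm_nonneg _) (fun n => ?_) ?_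
    · have h1 : 1 / (n + 1 : ℝ) ≤ 1 := by
        rw [div_le_one (by positivity)]; linarith [(Nat.cast_nonneg n : (0 : ℝ) ≤ n)]
      have := eul_err ν hae hR (hh n) h1 (n + 1) (hkh n).le N 1 _ hN hB
      rw [hkh, ← hcdef] at this
      refine this.trans ?_
      have b1 : (1 + 1 / (n + 1 : ℝ) * c) ^ (n + 1) ≤ Real.exp c := by
        have b2 : 1 + 1 / (n + 1 : ℝ) * c ≤ Real.exp (1 / (n + 1 : ℝ) * c) := by
          have := Real.add_one_le_exp (1 / (n + 1 : ℝ) * c); linarith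
        calc _ ≤ (Real.exp (1 / (n + 1 : ℝ) * c)) ^ (n + 1) := by gcongr
          _ = Real.exp c := by
            rw [← Real.exp_nat_mul, ← mul_assoc, hkh, one_mul]
      have e1 : ((n + 1 : ℕ) : ℝ) * (2 * N * R ^ 2 * (1 / (n + 1 : ℝ)) ^ 2)
          = 2 * N * R ^ 2 * (1 / (n + 1 : ℝ)) := by
        have := hkh n
        calc _ = 2 * N * R ^ 2 * (1 / (n + 1 : ℝ)) * (((n + 1 : ℕ) : ℝ) * (1 / (n + 1 : ℝ))) := by
              ring
          _ = _ := by rw [this, mul_one]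
      rw [e1]
      calc _ ≤ 2 * N * R ^ 2 * (1 / (n + 1 : ℝ)) * Real.exp c := by gcongr
        _ = _ := by ring
    · have := (tendsto_one_div_add_atTop_nhds_zero_nat (𝕜 := ℝ)).const_mul
        (2 * N * R ^ 2 * Real.exp c)
      simpa using this
  exact tendsto_nhds_unique lim1 (lim2.comp hg.tendsto_atTop)
end
end

section
/- Let a > 0, let ν be a probability measure on ℝ^d whose support is contained in a ball of radius R, and let γ_d^a denote the centered Gaussian measure on ℝ^d with covariance a·Id_d. Then there exists a map φ : ℝ^d → ℝ^d which is Lipschitz with Lipschitz constant at most √a · e^{R²/(2a)} and which pushes forward the standard Gaussian measure γ_d to the convolution γ_d^a ⋆ ν. -/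
open MeasureTheory Real Set
open scoped ENNReal NNReal

noncomputable section

namespace TG
open Filter Topology
open scoped RealInnerProductSpace

variable {d : ℕ}

/-- weight -/
def wt (s : ℝ) (x y : Ed d) : ℝ := Real.exp (s * ⟪x, y⟫)

lemma wt_le {s R : ℝ} (hs : 0 ≤ s) {x y : Ed d} (hy : ‖y‖ ≤ R) :
    wt s x y ≤ Real.exp (s * (‖x‖ * R)) := by
  unfold wt
  apply Real.exp_le_exp.2
  apply mul_le_mul_of_nonneg_left _ hs
  exact (real_inner_le_norm x y).trans (mul_le_mul_of_nonneg_left hy (norm_nonneg _))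

lemma wt_pos (s : ℝ) (x y : Ed d) : 0 < wt s x y := Real.exp_pos _

lemma wt_cont (s : ℝ) (x : Ed d) : Continuous (wt s x) := by
  unfold wt; fun_prop

section
variable {G : Type*} [NormedAddCommGroup G] [NormedSpace ℝ G]

/-- rank one operator -/
def op (y : Ed d) (g : G) : Ed d →L[ℝ] G := (innerSL ℝ y).smulRight g
@[simp] lemma op_apply (y : Ed d) (g : G) (p : Ed d) : op y g p = ⟪y, p⟫ • g := by
  simp [op, ContinuousLinearMap.smulRight_apply]
lemma op_norm (y : Ed d) (g : G) : ‖op y g‖ = ‖y‖ * ‖g‖ := by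
  rw [op, ContinuousLinearMap.norm_smulRight_apply, innerSL_apply_norm]
lemma op_cont : Continuous (fun p : Ed d × G => op p.1 p.2) := by
  have := (ContinuousLinearMap.smulRightL ℝ (Ed d) G).continuous₂.comp
    (((innerSL ℝ (E := Ed d)).continuous.comp continuous_fst).prodMk (continuous_snd (Y := G)))
  exact this
lemma op_sub_l (y y' : Ed d) (g : G) : op (y - y') g = op y g - op y' g := by
  ext p; simp [inner_sub_left, sub_smul]
lemma op_sub_r (y : Ed d) (g g' : G) : op y (g - g') = op y g - op y g' := by
  ext p; simp [smul_sub]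

lemma op_aesm' {α : Type*} [MeasurableSpace α] {ρ : Measure α} {F : α → G} {y : α → Ed d}
    (h1 : AEStronglyMeasurable y ρ) (hF : AEStronglyMeasurable F ρ) :
    AEStronglyMeasurable (fun z => op (y z) (F z)) ρ := by
  obtain ⟨y', m, e⟩ := h1
  obtain ⟨F', m', e'⟩ := hF
  refine ⟨fun z => op (y' z) (F' z), ?_, ?_⟩
  · have : StronglyMeasurable (fun z => (y' z, F' z)) := m.prodMk m'
    have h := Continuous.comp_stronglyMeasurable op_cont this
    exact h
  · filter_upwards [e, e'] with z h h'
    rw [h, h']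

lemma op_aesm {ρ : Measure (Ed d)} {F : Ed d → G} (hF : AEStronglyMeasurable F ρ) :
    AEStronglyMeasurable (fun y => op y (F y)) ρ :=
  op_aesm' (y := fun y => y) aestronglyMeasurable_id hF

lemma int_wt {ρ : Measure (Ed d)} [IsFiniteMeasure ρ] {s R B : ℝ} (hs : 0 ≤ s)
    (hR : ∀ᵐ y ∂ρ, ‖y‖ ≤ R) {F : Ed d → G} (hF : AEStronglyMeasurable F ρ)
    (hB : ∀ᵐ y ∂ρ, ‖F y‖ ≤ B) (x : Ed d) :
    Integrable (fun y => wt s x y • F y) ρ := by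
  apply Integrable.of_bound ((wt_cont s x).aestronglyMeasurable.smul hF)
    (Real.exp (s * (‖x‖ * R)) * B)
  filter_upwards [hR, hB] with y h1 h2
  rw [Pi.smul_apply', norm_smul, Real.norm_of_nonneg (wt_pos s x y).le]
  exact mul_le_mul (wt_le hs h1) h2 (norm_nonneg _) (Real.exp_pos _).le

lemma hasF_N {ρ : Measure (Ed d)} [IsFiniteMeasure ρ] {s R B : ℝ} (hs : 0 ≤ s)
    (hR : ∀ᵐ y ∂ρ, ‖y‖ ≤ R) (hR0 : 0 ≤ R) {F : Ed d → G} (hF : AEStronglyMeasurable F ρ)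
    (hB : ∀ᵐ y ∂ρ, ‖F y‖ ≤ B) (x : Ed d) :
    HasFDerivAt (fun x => ∫ y, wt s x y • F y ∂ρ)
      (∫ y, wt s x y • (s • op y (F y)) ∂ρ) x := by
  have hm : AEStronglyMeasurable (fun y : Ed d => (s • op y (F y))) ρ := by
    refine AEStronglyMeasurable.const_smul ?_ s
    exact op_aesm hF
  refine hasFDerivAt_integral_of_dominated_of_fderiv_le
    (F' := fun x y => wt s x y • (s • op y (F y)))
    (bound := fun _ => Real.exp (s * ((‖x‖ + 1) * R)) * (s * (R * B)))
    (Metric.ball_mem_nhds x one_pos) ?_ (int_wt hs hR hF hB x) ?_ ?_ (integrable_const _) ?_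
  · exact Eventually.of_forall fun x => (wt_cont s x).aestronglyMeasurable.smul hF
  · exact (wt_cont s x).aestronglyMeasurable.smul hm
  · filter_upwards [hR, hB] with y h1 h2 z hz
    have hz' : ‖z‖ ≤ ‖x‖ + 1 := by
      have := norm_sub_norm_le z x
      rw [mem_ball_iff_norm] at hz
      linarith
    rw [norm_smul, Real.norm_of_nonneg (wt_pos s z y).le, norm_smul, Real.norm_of_nonneg hs]
    have h3 : ‖op y (F y)‖ ≤ R * B := by
      rw [op_norm]
      exact mul_le_mul h1 h2 (norm_nonneg _) hR0
    have h4 : wt s z y ≤ Real.exp (s * ((‖x‖ + 1) * R)) :=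
      (wt_le hs h1).trans (Real.exp_le_exp.2 (by gcongr))
    have h5 := (wt_pos s z y).le
    gcongr
  · refine Eventually.of_forall fun y z _ => ?_
    have h1 : HasFDerivAt (fun x : Ed d => wt s x y) (wt s z y • (s • innerSL ℝ y)) z := by
      unfold wt
      have : HasFDerivAt (fun x : Ed d => s * ⟪x, y⟫) (s • innerSL ℝ y) z := by
        have h := ((innerSL ℝ y).hasFDerivAt (x := z)).const_smul s
        refine h.congr_of_eventuallyEq (Eventually.of_forall fun x => ?_)
        simp [real_inner_comm]
      exact this.exp
    refine (h1.smul_const (F y)).congr_fderiv ?_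
    ext p
    simp [smul_smul, mul_assoc]

/-- tilted measure -/
def tm (ρ : Measure (Ed d)) (s : ℝ) (x : Ed d) : Measure (Ed d) := ρ.tilted (fun y => s * ⟪x, y⟫)

lemma tm_prob {ρ : Measure (Ed d)} [IsProbabilityMeasure ρ] {s R : ℝ} (hs : 0 ≤ s)
    (hR : ∀ᵐ y ∂ρ, ‖y‖ ≤ R) (x : Ed d) : IsProbabilityMeasure (tm ρ s x) := by
  apply isProbabilityMeasure_tilted
  have := int_wt (F := fun _ => (1:ℝ)) (B := 1) hs hR aestronglyMeasurable_const (by simp) x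
  simpa [wt] using this

lemma tm_ae {ρ : Measure (Ed d)} (s : ℝ) (x : Ed d) {p : Ed d → Prop} (h : ∀ᵐ y ∂ρ, p y) :
    ∀ᵐ y ∂(tm ρ s x), p y := (tilted_absolutelyContinuous _ _).ae_le h

lemma Zpos {ρ : Measure (Ed d)} [IsProbabilityMeasure ρ] {s R : ℝ} (hs : 0 ≤ s)
    (hR : ∀ᵐ y ∂ρ, ‖y‖ ≤ R) (x : Ed d) : 0 < ∫ y, wt s x y ∂ρ := by
  have := int_wt (F := fun _ => (1:ℝ)) (B := 1) hs hR aestronglyMeasurable_const (by simp) x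
  simp only [smul_eq_mul, mul_one] at this
  exact integral_exp_pos this

lemma int_tm (ρ : Measure (Ed d)) (s : ℝ) (x : Ed d) (F : Ed d → G) :
    ∫ y, F y ∂(tm ρ s x) = (∫ y, wt s x y ∂ρ)⁻¹ • ∫ y, wt s x y • F y ∂ρ := by
  rw [tm, integral_tilted, ← integral_smul]
  congr 1; ext y
  rw [smul_smul, div_eq_inv_mul]; rfl

/-- derivative of tilted mean -/
def DF (ρ : Measure (Ed d)) (s : ℝ) (x : Ed d) (F : Ed d → G) : Ed d →L[ℝ] G :=
  s • (∫ y, op y (F y) ∂(tm ρ s x)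
    - op (∫ y, y ∂(tm ρ s x)) (∫ y, F y ∂(tm ρ s x)))

lemma hasF_tm [CompleteSpace G] {ρ : Measure (Ed d)} [IsProbabilityMeasure ρ] {s R B : ℝ} (hs : 0 ≤ s)
    (hR : ∀ᵐ y ∂ρ, ‖y‖ ≤ R) (hR0 : 0 ≤ R) {F : Ed d → G} (hF : AEStronglyMeasurable F ρ)
    (hB : ∀ᵐ y ∂ρ, ‖F y‖ ≤ B) (x : Ed d) :
    HasFDerivAt (fun x => ∫ y, F y ∂(tm ρ s x)) (DF ρ s x F) x := by
  have h1 := hasF_N (F := fun _ => (1:ℝ)) (B := 1) hs hR hR0 aestronglyMeasurable_const (by simp) x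
  have h2 := hasF_N hs hR hR0 hF hB x
  simp only [smul_eq_mul, mul_one] at h1
  have hZ := (Zpos hs hR x)
  have h3 := ((hasDerivAt_inv hZ.ne').comp_hasFDerivAt x h1).smul h2
  refine (h3.congr_of_eventuallyEq (Eventually.of_forall fun z => int_tm ρ s z F)).congr_fderiv ?_
  have i1 : Integrable (fun y => wt s x y • y) ρ := int_wt hs hR aestronglyMeasurable_id hR x
  have i2 : Integrable (fun y => wt s x y • op y (1:ℝ)) ρ := by
    refine int_wt hs hR (B := R) ?_ ?_ x
    · exact op_aesm aestronglyMeasurable_const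
    · simpa [op_norm] using hR
  have e1 (p : Ed d) : (∫ y, wt s x y • (s • op y (1:ℝ)) ∂ρ) p
      = s * ⟪∫ y, wt s x y • y ∂ρ, p⟫ := by
    simp_rw [smul_comm _ s]
    rw [integral_smul, _root_.smul_apply, ContinuousLinearMap.integral_apply i2,
      real_inner_comm, ← integral_inner i1]
    simp [real_inner_smul_right, real_inner_comm]
  have e2 : ∫ y, wt s x y • (s • op y (F y)) ∂ρ
      = s • ∫ y, wt s x y • (op y (F y)) ∂ρ := by
    simp_rw [smul_comm _ s]
    rw [integral_smul]
  generalize (∫ y, wt s x y • (s • op y (1:ℝ)) ∂ρ) = Q at e1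
  rw [e2, DF, int_tm, int_tm, int_tm]
  ext p
  simp [smul_smul, sub_eq_add_neg, real_inner_smul_left, e1]
  congr 1
  · ring_nf
  · congr 2; ring
end
end TG

namespace TG
open Filter Topology
open scoped RealInnerProductSpace

section
variable {d : ℕ} {G : Type*} [NormedAddCommGroup G] [NormedSpace ℝ G]

lemma norm_int_tm {ρ : Measure (Ed d)} [IsProbabilityMeasure ρ] {s R B : ℝ} (hs : 0 ≤ s)
    (hR : ∀ᵐ y ∂ρ, ‖y‖ ≤ R) {F : Ed d → G}
    (hB : ∀ᵐ y ∂ρ, ‖F y‖ ≤ B) (x : Ed d) : ‖∫ y, F y ∂(tm ρ s x)‖ ≤ B := by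
  have := tm_prob hs hR x
  simpa using norm_integral_le_of_norm_le_const (tm_ae s x hB)

lemma op_bd {ρ : Measure (Ed d)} {R B : ℝ} (hR0 : 0 ≤ R)
    (hR : ∀ᵐ y ∂ρ, ‖y‖ ≤ R) {F : Ed d → G}
    (hB : ∀ᵐ y ∂ρ, ‖F y‖ ≤ B) : ∀ᵐ y ∂ρ, ‖op y (F y)‖ ≤ R * B := by
  filter_upwards [hR, hB] with y h1 h2
  rw [op_norm]
  exact mul_le_mul h1 h2 (norm_nonneg _) hR0

lemma DF_norm {ρ : Measure (Ed d)} [IsProbabilityMeasure ρ] {s R B : ℝ} (hs : 0 ≤ s)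
    (hR : ∀ᵐ y ∂ρ, ‖y‖ ≤ R) (hR0 : 0 ≤ R) {F : Ed d → G}
    (hB : ∀ᵐ y ∂ρ, ‖F y‖ ≤ B) (x : Ed d) : ‖DF ρ s x F‖ ≤ s * (2 * R * B) := by
  unfold DF
  rw [norm_smul, Real.norm_of_nonneg hs]
  apply mul_le_mul_of_nonneg_left _ hs
  refine (norm_sub_le _ _).trans ?_
  have h1 := norm_int_tm hs hR (op_bd hR0 hR hB) x
  have h2 := norm_int_tm hs hR hR x
  have h3 := norm_int_tm hs hR hB x
  rw [op_norm]
  have := mul_le_mul h2 h3 (norm_nonneg _) hR0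
  linarith

lemma int_lip [CompleteSpace G] {ρ : Measure (Ed d)} [IsProbabilityMeasure ρ] {s R B : ℝ} (hs : 0 ≤ s)
    (hR : ∀ᵐ y ∂ρ, ‖y‖ ≤ R) (hR0 : 0 ≤ R) {F : Ed d → G} (hF : AEStronglyMeasurable F ρ)
    (hB : ∀ᵐ y ∂ρ, ‖F y‖ ≤ B) (x x' : Ed d) :
    ‖∫ y, F y ∂(tm ρ s x) - ∫ y, F y ∂(tm ρ s x')‖ ≤ s * (2 * R * B) * ‖x - x'‖ :=
  convex_univ.norm_image_sub_le_of_norm_hasFDerivWithin_le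
    (fun z _ => (hasF_tm hs hR hR0 hF hB z).hasFDerivWithinAt)
    (fun z _ => DF_norm hs hR hR0 hB z) (mem_univ _) (mem_univ _)

/-- velocity -/
def vel (ρ : Measure (Ed d)) (s : ℝ) (x : Ed d) : Ed d := ∫ y, y ∂(tm ρ s x)

lemma vel_norm {ρ : Measure (Ed d)} [IsProbabilityMeasure ρ] {s R : ℝ} (hs : 0 ≤ s)
    (hR : ∀ᵐ y ∂ρ, ‖y‖ ≤ R) (x : Ed d) : ‖vel ρ s x‖ ≤ R := norm_int_tm hs hR hR x

lemma vel_hasF {ρ : Measure (Ed d)} [IsProbabilityMeasure ρ] {s R : ℝ} (hs : 0 ≤ s)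
    (hR : ∀ᵐ y ∂ρ, ‖y‖ ≤ R) (hR0 : 0 ≤ R) (x : Ed d) :
    HasFDerivAt (vel ρ s) (DF ρ s x (fun y => y)) x :=
  hasF_tm hs hR hR0 aestronglyMeasurable_id hR x

lemma vel_D_norm {ρ : Measure (Ed d)} [IsProbabilityMeasure ρ] {s R : ℝ} (hs : 0 ≤ s)
    (hR : ∀ᵐ y ∂ρ, ‖y‖ ≤ R) (hR0 : 0 ≤ R) (x : Ed d) :
    ‖DF ρ s x (fun y => y)‖ ≤ s * R ^ 2 := by
  unfold DF
  rw [norm_smul, Real.norm_of_nonneg hs]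
  apply mul_le_mul_of_nonneg_left _ hs
  have hP := tm_prob hs hR x
  have hR' := tm_ae s x hR
  generalize tm ρ s x = μ at hP hR'
  have i0 : Integrable (fun y : Ed d => y) μ := Integrable.of_bound aestronglyMeasurable_id R hR'
  have i1 : Integrable (fun y : Ed d => op y y) μ :=
    Integrable.of_bound (op_aesm aestronglyMeasurable_id) (R * R) (op_bd hR0 hR' hR')
  set m := ∫ y, y ∂μ with hm
  apply ContinuousLinearMap.opNorm_le_of_unit_norm (by positivity)
  intro p hp
  have ib (y : Ed d) (hy : ‖y‖ ≤ R) : |⟪y, p⟫| ≤ R := by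
    have := abs_real_inner_le_norm y p
    rw [hp, mul_one] at this
    exact this.trans hy
  have i2 : Integrable (fun y : Ed d => ⟪y, p⟫) μ := by
    refine Integrable.of_bound (by fun_prop) R ?_
    filter_upwards [hR'] with y hy using ib y hy
  have i3 : Integrable (fun y : Ed d => ⟪y, p⟫ ^ 2) μ := by
    refine Integrable.of_bound (by fun_prop) (R ^ 2) ?_
    filter_upwards [hR'] with y hy
    rw [norm_pow]
    exact pow_le_pow_left₀ (norm_nonneg _) (ib y hy) 2
  have i4 : Integrable (fun y : Ed d => ⟪y, p⟫ • y) μ := by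
    refine Integrable.of_bound (by fun_prop) (R * R) ?_
    filter_upwards [hR'] with y hy
    rw [norm_smul]
    exact mul_le_mul (ib y hy) hy (norm_nonneg _) hR0
  have em : ∫ y, ⟪y, p⟫ ∂μ = ⟪m, p⟫ := by
    rw [real_inner_comm, ← integral_inner i0]
    simp_rw [real_inner_comm]
  have e1 : (∫ y, op y y ∂μ - op m m) p = ∫ y, (⟪y, p⟫ - ⟪m, p⟫) • y ∂μ := by
    simp_rw [sub_smul]
    have i0' : Integrable (fun y : Ed d => ⟪m, p⟫ • y) μ := i0.smul ⟪m, p⟫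
    rw [integral_sub i4 i0', integral_smul, _root_.sub_apply,
      ContinuousLinearMap.integral_apply i1]
    simp [hm]
  rw [e1]
  set c := ⟪m, p⟫
  have i6 : Integrable (fun y : Ed d => ⟪y, p⟫ ^ 2 - 2 * c * ⟪y, p⟫) μ :=
    i3.sub (i2.const_mul (2 * c))
  have i7 : Integrable (fun y : Ed d => ⟪y, p⟫ ^ 2 - 2 * c * ⟪y, p⟫ + (c ^ 2 + R ^ 2)) μ :=
    i6.add (integrable_const _)
  have i5 : Integrable (fun y : Ed d => (⟪y, p⟫ ^ 2 - 2 * c * ⟪y, p⟫ + (c ^ 2 + R ^ 2)) / 2) μ :=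
    i7.div_const _
  refine (norm_integral_le_of_norm_le i5 ?_).trans ?_
  · filter_upwards [hR'] with y hy
    rw [norm_smul, Real.norm_eq_abs]
    have h1 : |⟪y, p⟫ - c| * ‖y‖ ≤ |⟪y, p⟫ - c| * R := by gcongr
    have h2 := sq_abs (⟪y, p⟫ - c)
    nlinarith [sq_nonneg (|⟪y, p⟫ - c| - R)]
  · rw [integral_div, integral_add i6 (integrable_const _),
      integral_sub i3 (i2.const_mul (2 * c)), integral_const_mul, em]
    have h3 : ∫ y, ⟪y, p⟫ ^ 2 ∂μ ≤ R ^ 2 := by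
      have := integral_mono_ae i3 (integrable_const (R ^ 2)) (by
        filter_upwards [hR'] with y hy
        have := pow_le_pow_left₀ (abs_nonneg _) (ib y hy) 2
        rwa [sq_abs] at this)
      simpa using this
    simp
    nlinarith [sq_nonneg c]

lemma vel_lip {ρ : Measure (Ed d)} [IsProbabilityMeasure ρ] {s R : ℝ} (hs : 0 ≤ s)
    (hR : ∀ᵐ y ∂ρ, ‖y‖ ≤ R) (hR0 : 0 ≤ R) (x x' : Ed d) :
    ‖vel ρ s x - vel ρ s x'‖ ≤ s * R ^ 2 * ‖x - x'‖ :=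
  convex_univ.norm_image_sub_le_of_norm_hasFDerivWithin_le
    (fun z _ => (vel_hasF hs hR hR0 z).hasFDerivWithinAt)
    (fun z _ => vel_D_norm hs hR hR0 z) (mem_univ _) (mem_univ _)

lemma vel_D_lip {ρ : Measure (Ed d)} [IsProbabilityMeasure ρ] {s R : ℝ} (hs : 0 ≤ s)
    (hR : ∀ᵐ y ∂ρ, ‖y‖ ≤ R) (hR0 : 0 ≤ R) (x x' : Ed d) :
    ‖DF ρ s x (fun y => y) - DF ρ s x' (fun y => y)‖ ≤ 4 * s ^ 2 * R ^ 3 * ‖x - x'‖ := by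
  have h1 := int_lip hs hR hR0 (op_aesm (F := fun y => y) aestronglyMeasurable_id)
    (op_bd hR0 hR hR) x x'
  have h2 := vel_lip hs hR hR0 x x'
  have n1 := vel_norm hs hR x
  have n2 := vel_norm hs hR x'
  unfold DF
  rw [← smul_sub, norm_smul, Real.norm_of_nonneg hs]
  change s * ‖_ - op (vel ρ s x) (vel ρ s x) - (_ - op (vel ρ s x') (vel ρ s x'))‖ ≤ _
  generalize vel ρ s x = m at *
  generalize vel ρ s x' = m' at *
  generalize (∫ y, op y y ∂(tm ρ s x)) = A at *
  generalize (∫ y, op y y ∂(tm ρ s x')) = A' at *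
  have e : A - op m m - (A' - op m' m') = (A - A') - (op (m - m') m + op m' (m - m')) := by
    rw [op_sub_l, op_sub_r]; abel
  have h3 : ‖A - op m m - (A' - op m' m')‖ ≤ s * (2 * R * (R * R)) * ‖x - x'‖ +
      (s * R ^ 2 * ‖x - x'‖ * R + R * (s * R ^ 2 * ‖x - x'‖)) := by
    rw [e]
    refine (norm_sub_le _ _).trans (add_le_add h1 ((norm_add_le _ _).trans ?_))
    rw [op_norm, op_norm]
    gcongr
  calc _ ≤ s * _ := mul_le_mul_of_nonneg_left h3 hs
    _ = _ := by ring
end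
end TG

namespace TG
open Filter Topology
open scoped RealInnerProductSpace

section
variable {d : ℕ}

/-- test functions -/
structure UU (L : ℝ) (u : Ed d → ℂ) : Prop where
  diff : Differentiable ℝ u
  bd : ∀ x, ‖fderiv ℝ u x‖ ≤ L
  lip : ∀ x x', ‖fderiv ℝ u x - fderiv ℝ u x'‖ ≤ L * ‖x - x'‖
  nb : ∀ x, ‖u x‖ ≤ 1

/-- Euler step -/
def T (ρ : Measure (Ed d)) (s h : ℝ) (x : Ed d) : Ed d := x + h • vel ρ s x

lemma T_lip {ρ : Measure (Ed d)} [IsProbabilityMeasure ρ] {s R h : ℝ} (hs : 0 ≤ s)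
    (hR : ∀ᵐ y ∂ρ, ‖y‖ ≤ R) (hR0 : 0 ≤ R) (hh : 0 ≤ h) (x x' : Ed d) :
    ‖T ρ s h x - T ρ s h x'‖ ≤ (1 + h * (s * R ^ 2)) * ‖x - x'‖ := by
  have e : T ρ s h x - T ρ s h x' = (x - x') + h • (vel ρ s x - vel ρ s x') := by
    unfold T; rw [smul_sub]; abel
  rw [e]
  refine (norm_add_le _ _).trans ?_
  rw [norm_smul, Real.norm_of_nonneg hh]
  have := mul_le_mul_of_nonneg_left (vel_lip hs hR hR0 x x') hh
  linarith

lemma UU_comp {ρ : Measure (Ed d)} [IsProbabilityMeasure ρ] {s S R h L : ℝ} (hs : 0 ≤ s) (hS : s ≤ S)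
    (hR : ∀ᵐ y ∂ρ, ‖y‖ ≤ R) (hR0 : 0 ≤ R) (hh : 0 ≤ h) (h1 : h ≤ 1) (hL : 0 ≤ L)
    {u : Ed d → ℂ} (hu : UU L u) :
    UU (L * (1 + h * (2 * (S * R ^ 2) + (S * R ^ 2) ^ 2 + 4 * S ^ 2 * R ^ 3))) (u ∘ T ρ s h) := by
  set A : Ed d → Ed d →L[ℝ] Ed d := fun x => ContinuousLinearMap.id ℝ _ + h • DF ρ s x (fun y => y)
    with hA
  have hT (x : Ed d) : HasFDerivAt (T ρ s h) (A x) x :=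
    (hasFDerivAt_id x).add ((vel_hasF hs hR hR0 x).const_smul h)
  have hD (x : Ed d) : HasFDerivAt (u ∘ T ρ s h) ((fderiv ℝ u (T ρ s h x)).comp (A x)) x :=
    (hu.diff _).hasFDerivAt.comp x (hT x)
  have hα : s * R ^ 2 ≤ S * R ^ 2 := by gcongr
  have hα0 : 0 ≤ s * R ^ 2 := by positivity
  have hC : 4 * s ^ 2 * R ^ 3 ≤ 4 * S ^ 2 * R ^ 3 := by gcongr
  have hC0 : 0 ≤ 4 * s ^ 2 * R ^ 3 := by positivity
  have nA (x : Ed d) : ‖A x‖ ≤ 1 + h * (s * R ^ 2) := by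
    refine (norm_add_le _ _).trans (add_le_add ContinuousLinearMap.norm_id_le ?_)
    rw [norm_smul, Real.norm_of_nonneg hh]
    exact mul_le_mul_of_nonneg_left (vel_D_norm hs hR hR0 x) hh
  have lA (x x' : Ed d) : ‖A x - A x'‖ ≤ h * (4 * s ^ 2 * R ^ 3 * ‖x - x'‖) := by
    have : A x - A x' = h • (DF ρ s x (fun y => y) - DF ρ s x' (fun y => y)) := by
      simp only [hA]; rw [smul_sub]; abel
    rw [this, norm_smul, Real.norm_of_nonneg hh]
    exact mul_le_mul_of_nonneg_left (vel_D_lip hs hR hR0 x x') hh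
  have key : (1 + h * (s * R ^ 2)) ^ 2 + h * (4 * s ^ 2 * R ^ 3) ≤
      1 + h * (2 * (S * R ^ 2) + (S * R ^ 2) ^ 2 + 4 * S ^ 2 * R ^ 3) := by
    generalize s * R ^ 2 = α at *
    generalize S * R ^ 2 = α' at *
    generalize 4 * s ^ 2 * R ^ 3 = C at *
    generalize 4 * S ^ 2 * R ^ 3 = C' at *
    have a1 : h * α ≤ h * α' := by gcongr
    have a2 : h * C ≤ h * C' := by gcongr
    have a3 : h ^ 2 * α ^ 2 ≤ h * α' ^ 2 := by
      have : h ^ 2 ≤ h := by nlinarith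
      gcongr
    nlinarith
  refine ⟨fun x => (hD x).differentiableAt, fun x => ?_, fun x x' => ?_, fun x => hu.nb _⟩
  · rw [(hD x).fderiv]
    refine (ContinuousLinearMap.opNorm_comp_le _ _).trans ?_
    refine mul_le_mul (hu.bd _) ((nA x).trans (le_trans ?_ key)) (norm_nonneg _) hL
    have := mul_nonneg hh hα0
    have := mul_nonneg hh hC0
    nlinarith
  · rw [(hD x).fderiv, (hD x').fderiv]
    have e : (fderiv ℝ u (T ρ s h x)).comp (A x) - (fderiv ℝ u (T ρ s h x')).comp (A x')
      = (fderiv ℝ u (T ρ s h x) - fderiv ℝ u (T ρ s h x')).comp (A x)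
        + (fderiv ℝ u (T ρ s h x')).comp (A x - A x') := by
      ext p; simp
    rw [e]
    have b1 := (hu.lip (T ρ s h x) (T ρ s h x')).trans
      (mul_le_mul_of_nonneg_left (T_lip hs hR hR0 hh x x') hL)
    have p1 : 0 ≤ 1 + h * (s * R ^ 2) := by positivity
    calc _ ≤ L * ((1 + h * (s * R ^ 2)) * ‖x - x'‖) * (1 + h * (s * R ^ 2))
          + L * (h * (4 * s ^ 2 * R ^ 3 * ‖x - x'‖)) := by
          refine (norm_add_le _ _).trans (add_le_add ?_ ?_)
          · refine (ContinuousLinearMap.opNorm_comp_le _ _).trans ?_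
            exact mul_le_mul b1 (nA x) (norm_nonneg _) (by positivity)
          · refine (ContinuousLinearMap.opNorm_comp_le _ _).trans ?_
            exact mul_le_mul (hu.bd _) (lA x x') (norm_nonneg _) hL
      _ = L * ((1 + h * (s * R ^ 2)) ^ 2 + h * (4 * s ^ 2 * R ^ 3)) * ‖x - x'‖ := by ring
      _ ≤ _ := by gcongr

lemma UU_taylor {L : ℝ} (hL : 0 ≤ L) {u : Ed d → ℂ} (hu : UU L u) (x p : Ed d) :
    ‖u (x + p) - u x - fderiv ℝ u x p‖ ≤ L * ‖p‖ ^ 2 := by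
  have := (convex_segment x (x + p)).norm_image_sub_le_of_norm_fderiv_le' (𝕜 := ℝ) (f := u)
    (φ := fderiv ℝ u x) (C := L * ‖p‖) (fun z _ => hu.diff z) (fun z hz => ?_)
    (left_mem_segment ℝ _ _) (right_mem_segment ℝ _ _)
  · simp only [add_sub_cancel_left] at this
    calc _ ≤ _ := this
      _ = _ := by ring
  · refine (hu.lip z x).trans (mul_le_mul_of_nonneg_left ?_ hL)
    have := norm_sub_le_of_mem_segment hz
    simpa using this
end
end TG

namespace TG
open Filter Topology
open scoped RealInnerProductSpace

section
variable {d : ℕ}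

/-- density -/
def gp (a : ℝ) (x : Ed d) : ℝ := (2 * π * a) ^ (-(d : ℝ) / 2) * Real.exp (-‖x‖ ^ 2 / (2 * a))

lemma gp_nonneg {a : ℝ} (ha : 0 < a) (x : Ed d) : 0 ≤ gp a x := by
  unfold gp; have := Real.pi_pos; positivity

lemma gp_cont (a : ℝ) : Continuous (gp a : Ed d → ℝ) := by
  unfold gp; fun_prop

lemma gp_integral {a : ℝ} (ha : 0 < a) : ∫ x : Ed d, gp a x = 1 := by
  unfold gp
  rw [integral_const_mul]
  have h := GaussianFourier.integral_rexp_neg_mul_sq_norm (V := Ed d) (b := 1 / (2 * a)) (by positivity)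
  have e : ∀ x : Ed d, -‖x‖ ^ 2 / (2 * a) = -(1 / (2 * a)) * ‖x‖ ^ 2 := fun x => by ring
  simp_rw [e]
  rw [h, finrank_euclideanSpace_fin, show π / (1 / (2 * a)) = 2 * π * a by field_simp,
    ← Real.rpow_add (by have := Real.pi_pos; positivity)]
  rw [show -(d : ℝ) / 2 + d / 2 = 0 by ring, Real.rpow_zero]

lemma gp_integrable {a : ℝ} (ha : 0 < a) : Integrable (gp a : Ed d → ℝ) := by
  by_contra h
  have := gp_integral (d := d) ha
  rw [integral_undef h] at this
  norm_num at this

lemma gc_eq (a : ℝ) : gaussianCov d a = volume.withDensity (fun x => ENNReal.ofReal (gp a x)) := rfl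

lemma gc_prob {a : ℝ} (ha : 0 < a) : IsProbabilityMeasure (gaussianCov d a) := by
  constructor
  rw [gc_eq, withDensity_apply _ MeasurableSet.univ, Measure.restrict_univ,
    ← ofReal_integral_eq_lintegral_ofReal (gp_integrable ha) (Eventually.of_forall (gp_nonneg ha)),
    gp_integral ha, ENNReal.ofReal_one]

lemma gc_integral {a : ℝ} (ha : 0 < a) (f : Ed d → ℂ) :
    ∫ x, f x ∂(gaussianCov d a) = ∫ x, gp a x • f x := by
  rw [gc_eq, integral_withDensity_eq_integral_toReal_smul]
  · simp_rw [ENNReal.toReal_ofReal (gp_nonneg ha _)]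
  · exact (gp_cont a).measurable.ennreal_ofReal
  · simp

lemma std_eq : stdGaussian d = gaussianCov d 1 := by
  unfold stdGaussian gaussianCov; simp

/-- tilt base -/
def q (a t : ℝ) (y : Ed d) : ℝ := -(t ^ 2 * ‖y‖ ^ 2) / (2 * a)

/-- base measure -/
def rh (ν : Measure (Ed d)) (a t : ℝ) : Measure (Ed d) := ν.tilted (q a t)

lemma q_int {ν : Measure (Ed d)} [IsProbabilityMeasure ν] {a t : ℝ} (ha : 0 < a) :
    Integrable (fun y => Real.exp (q a t y)) ν := by
  refine Integrable.of_bound (by unfold q; fun_prop) 1 (Eventually.of_forall fun y => ?_)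
  rw [Real.norm_of_nonneg (Real.exp_pos _).le, Real.exp_le_one_iff, q, neg_div]
  have : 0 ≤ t ^ 2 * ‖y‖ ^ 2 / (2 * a) := by positivity
  linarith

lemma rh_prob {ν : Measure (Ed d)} [IsProbabilityMeasure ν] {a t : ℝ} (ha : 0 < a) :
    IsProbabilityMeasure (rh ν a t) := isProbabilityMeasure_tilted (q_int ha)

lemma rh_ae {ν : Measure (Ed d)} {a t : ℝ} {p : Ed d → Prop} (h : ∀ᵐ y ∂ν, p y) :
    ∀ᵐ y ∂(rh ν a t), p y := (tilted_absolutelyContinuous _ _).ae_le h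

lemma gp_shift {a : ℝ} (ha : 0 < a) (t : ℝ) (x y : Ed d) :
    gp a (x - t • y) = gp a x * Real.exp (q a t y + t / a * ⟪x, y⟫) := by
  unfold gp q
  rw [mul_assoc _ (Real.exp _) (Real.exp _), ← Real.exp_add]
  congr 2
  rw [norm_sub_sq_real, norm_smul, real_inner_smul_right, mul_pow, Real.norm_eq_abs, sq_abs]
  field_simp
  ring

lemma inner_zero {ν : Measure (Ed d)} [IsProbabilityMeasure ν] {a t R : ℝ} (ha : 0 < a)
    (ht : 0 ≤ t) (hR : ∀ᵐ y ∂ν, ‖y‖ ≤ R) (x : Ed d) (Λ : Ed d →L[ℝ] ℂ) :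
    ∫ y, gp a (x - t • y) • Λ (y - vel (rh ν a t) (t / a) x) ∂ν = 0 := by
  have hi : Integrable (fun y => Real.exp (q a t y + t / a * ⟪x, y⟫)) ν := by
    refine Integrable.of_bound (by unfold q; fun_prop) (Real.exp (t / a * (‖x‖ * R))) ?_
    filter_upwards [hR] with y hy
    rw [Real.norm_of_nonneg (Real.exp_pos _).le, Real.exp_le_exp, q, neg_div]
    have h1 : 0 ≤ t ^ 2 * ‖y‖ ^ 2 / (2 * a) := by positivity
    have h2 : ⟪x, y⟫ ≤ ‖x‖ * R := (real_inner_le_norm x y).trans (by gcongr)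
    have h3 : t / a * ⟪x, y⟫ ≤ t / a * (‖x‖ * R) := mul_le_mul_of_nonneg_left h2 (by positivity)
    linarith
  have hi2 : Integrable (fun y => Real.exp (q a t y + t / a * ⟪x, y⟫) • y) ν :=
    by
    refine Integrable.mono' (hi.mul_const R) (hi.aestronglyMeasurable.smul aestronglyMeasurable_id) ?_
    filter_upwards [hR] with y hy
    rw [norm_smul, Real.norm_of_nonneg (Real.exp_pos _).le]
    gcongr
  have hv : vel (rh ν a t) (t / a) x = (∫ y, Real.exp (q a t y + t / a * ⟪x, y⟫) ∂ν)⁻¹ •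
      ∫ y, Real.exp (q a t y + t / a * ⟪x, y⟫) • y ∂ν := by
    unfold vel tm rh
    rw [tilted_tilted (q_int ha), integral_tilted, ← integral_smul]
    congr 1; ext1 y
    rw [smul_smul, div_eq_inv_mul]; rfl
  have hZ : 0 < ∫ y, Real.exp (q a t y + t / a * ⟪x, y⟫) ∂ν := integral_exp_pos hi
  set v := vel (rh ν a t) (t / a) x
  have hi3 : Integrable (fun y => Real.exp (q a t y + t / a * ⟪x, y⟫) • v) ν := hi.smul_const v
  have e : ∀ y, gp a (x - t • y) • Λ (y - v)
      = (gp a x • Λ) (Real.exp (q a t y + t / a * ⟪x, y⟫) • y - Real.exp (q a t y + t / a * ⟪x, y⟫) • v) := by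
    intro y
    rw [gp_shift ha, ← smul_sub, map_smul, _root_.smul_apply, smul_smul, mul_comm]
  simp_rw [e]
  have hi4 : Integrable (fun y => Real.exp (q a t y + t / a * ⟪x, y⟫) • y
    - Real.exp (q a t y + t / a * ⟪x, y⟫) • v) ν := hi2.sub hi3
  rw [ContinuousLinearMap.integral_comp_comm _ hi4, integral_sub hi2 hi3,
    integral_smul_const, hv, smul_inv_smul₀ hZ.ne', sub_self, map_zero]

end
end TG

namespace TG
open Filter Topology
open scoped RealInnerProductSpace

section
variable {d : ℕ}

lemma ae_snd {γ ν : Measure (Ed d)} [SFinite γ] [SFinite ν] {p : Ed d → Prop} (h : ∀ᵐ y ∂ν, p y) :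
    ∀ᵐ z ∂(γ.prod ν), p z.2 := Measure.quasiMeasurePreserving_snd.ae h

lemma vanish {ν : Measure (Ed d)} [IsProbabilityMeasure ν] {a t R L : ℝ} (ha : 0 < a)
    (ht : 0 ≤ t) (hR : ∀ᵐ y ∂ν, ‖y‖ ≤ R) (hR0 : 0 ≤ R) (hL : 0 ≤ L)
    {D : Ed d → Ed d →L[ℝ] ℂ} (hD : Continuous D) (hb : ∀ x, ‖D x‖ ≤ L)
    (hvc : Continuous (vel (rh ν a t) (t / a))) (hvb : ∀ x, ‖vel (rh ν a t) (t / a) x‖ ≤ R) :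
    Integrable (fun z : Ed d × Ed d => D (z.1 + t • z.2) (z.2 - vel (rh ν a t) (t / a) (z.1 + t • z.2)))
      ((gaussianCov d a).prod ν) ∧
    ∫ z : Ed d × Ed d, D (z.1 + t • z.2) (z.2 - vel (rh ν a t) (t / a) (z.1 + t • z.2))
      ∂((gaussianCov d a).prod ν) = 0 := by
  have hP := gc_prob (d := d) ha
  set v := vel (rh ν a t) (t / a) with hv
  have bd : ∀ (x y : Ed d), ‖y‖ ≤ R → ‖D x (y - v x)‖ ≤ L * (R + R) := fun x y hy =>
    ((D x).le_opNorm _).trans (mul_le_mul (hb x) ((norm_sub_le _ _).trans (add_le_add hy (hvb x)))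
      (norm_nonneg _) hL)
  have hΦ : Continuous (fun z : Ed d × Ed d => D z.1 (z.2 - v z.1)) :=
    (hD.comp continuous_fst).clm_apply (continuous_snd.sub (hvc.comp continuous_fst))
  have hsh : Continuous (fun z : Ed d × Ed d => (z.1 + t • z.2, z.2)) := by fun_prop
  have i1 : Integrable (fun z : Ed d × Ed d => D (z.1 + t • z.2) (z.2 - v (z.1 + t • z.2)))
      ((gaussianCov d a).prod ν) := by
    refine Integrable.of_bound (hΦ.comp hsh).aestronglyMeasurable (L * (R + R)) ?_
    filter_upwards [ae_snd hR] with z hz using bd _ _ hz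
  refine ⟨i1, ?_⟩
  rw [integral_prod_symm _ i1]
  have e1 : ∀ y : Ed d, ∫ x, D (x + t • y) (y - v (x + t • y)) ∂(gaussianCov d a)
      = ∫ x, gp a (x - t • y) • D x (y - v x) := by
    intro y
    rw [gc_integral ha, ← integral_sub_right_eq_self _ (t • y)]
    simp
  simp_rw [e1]
  rw [integral_integral_swap]
  · simp_rw [hv, inner_zero ha ht hR]
    simp
  · have hm : Continuous (fun z : Ed d × Ed d => gp a (z.2 - t • z.1) • D z.2 (z.1 - v z.2)) := by
      have h1 : Continuous (fun z : Ed d × Ed d => gp a (z.2 - t • z.1)) :=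
        (gp_cont a).comp (by fun_prop)
      exact h1.smul (hΦ.comp continuous_swap)
    have hg : Integrable (fun z : Ed d × Ed d => gp a (z.2 - t • z.1)) (ν.prod volume) := by
      have h1 : Continuous (fun z : Ed d × Ed d => gp a (z.2 - t • z.1)) :=
        (gp_cont a).comp (by fun_prop)
      rw [integrable_prod_iff h1.aestronglyMeasurable]
      constructor
      · exact Eventually.of_forall fun y => (gp_integrable ha).comp_sub_right (t • y)
      · have : ∀ y : Ed d, ∫ x, ‖gp a (x - t • y)‖ = 1 := by
          intro y
          simp_rw [Real.norm_of_nonneg (gp_nonneg ha _)]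
          rw [integral_sub_right_eq_self (gp a), gp_integral ha]
        simp only [this]
        exact integrable_const _
    refine Integrable.mono' (hg.mul_const (L * (R + R))) hm.aestronglyMeasurable ?_
    have : ∀ᵐ z ∂(ν.prod (volume : Measure (Ed d))), ‖z.1‖ ≤ R :=
      Measure.quasiMeasurePreserving_fst.ae hR
    filter_upwards [this] with z hz
    change ‖gp a (z.2 - t • z.1) • D z.2 (z.1 - v z.2)‖ ≤ _
    rw [norm_smul, Real.norm_of_nonneg (gp_nonneg ha _)]
    exact mul_le_mul_of_nonneg_left (bd _ _ hz) (gp_nonneg ha _)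

/-- expectation -/
def EA (ν : Measure (Ed d)) (a : ℝ) (u : Ed d → ℂ) (t : ℝ) : ℂ :=
  ∫ z : Ed d × Ed d, u (z.1 + t • z.2) ∂((gaussianCov d a).prod ν)

lemma UU.cont {L : ℝ} {u : Ed d → ℂ} (hu : UU L u) : Continuous u := hu.diff.continuous

lemma UU.dcont {L : ℝ} (hL : 0 ≤ L) {u : Ed d → ℂ} (hu : UU L u) : Continuous (fderiv ℝ u) := by
  have : LipschitzWith L.toNNReal (fderiv ℝ u) := by
    apply LipschitzWith.of_dist_le_mul
    intro x y
    rw [dist_eq_norm, dist_eq_norm, Real.coe_toNNReal _ hL]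
    exact hu.lip x y
  exact this.continuous

lemma one_step {ν : Measure (Ed d)} [IsProbabilityMeasure ν] {a t R L h : ℝ} (ha : 0 < a)
    (ht : 0 ≤ t) (hR : ∀ᵐ y ∂ν, ‖y‖ ≤ R) (hR0 : 0 ≤ R) (hL : 0 ≤ L) (hh : 0 ≤ h)
    {u : Ed d → ℂ} (hu : UU L u) :
    ‖EA ν a u (t + h) - EA ν a (u ∘ T (rh ν a t) (t / a) h) t‖ ≤ 2 * L * R ^ 2 * h ^ 2 := by
  have hP := gc_prob (d := d) ha
  have hQ := rh_prob (ν := ν) (t := t) ha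
  have hRr : ∀ᵐ y ∂(rh ν a t), ‖y‖ ≤ R := rh_ae hR
  have hs : 0 ≤ t / a := by positivity
  have hvc : Continuous (vel (rh ν a t) (t / a)) :=
    continuous_iff_continuousAt.2 fun x => (vel_hasF hs hRr hR0 x).continuousAt
  have hvb := vel_norm hs hRr
  obtain ⟨i1, z1⟩ := vanish ha ht hR hR0 hL (hu.dcont hL) hu.bd hvc hvb
  unfold EA T
  set v := vel (rh ν a t) (t / a)
  have i2 : Integrable (fun z : Ed d × Ed d => u (z.1 + (t + h) • z.2)) ((gaussianCov d a).prod ν) :=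
    Integrable.of_bound (hu.cont.comp (by fun_prop)).aestronglyMeasurable 1
      (Eventually.of_forall fun z => hu.nb _)
  have i3 : Integrable (fun z : Ed d × Ed d => u ((z.1 + t • z.2) + h • v (z.1 + t • z.2)))
      ((gaussianCov d a).prod ν) :=
    Integrable.of_bound (hu.cont.comp (by fun_prop)).aestronglyMeasurable 1
      (Eventually.of_forall fun z => hu.nb _)
  have i4 : Integrable (fun z : Ed d × Ed d =>
      h • fderiv ℝ u (z.1 + t • z.2) (z.2 - v (z.1 + t • z.2)))
      ((gaussianCov d a).prod ν) := i1.smul h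
  have z4 : ∫ z : Ed d × Ed d, h • fderiv ℝ u (z.1 + t • z.2) (z.2 - v (z.1 + t • z.2))
      ∂((gaussianCov d a).prod ν) = 0 := by rw [integral_smul, z1, smul_zero]
  have e : ∫ z : Ed d × Ed d, u (z.1 + (t + h) • z.2) ∂((gaussianCov d a).prod ν)
      - ∫ z : Ed d × Ed d, u ((z.1 + t • z.2) + h • v (z.1 + t • z.2)) ∂((gaussianCov d a).prod ν)
      = ∫ z : Ed d × Ed d, (u (z.1 + (t + h) • z.2) - u ((z.1 + t • z.2) + h • v (z.1 + t • z.2))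
        - h • fderiv ℝ u (z.1 + t • z.2) (z.2 - v (z.1 + t • z.2))) ∂((gaussianCov d a).prod ν) := by
    have i5 : Integrable (fun z : Ed d × Ed d => u (z.1 + (t + h) • z.2)
      - u ((z.1 + t • z.2) + h • v (z.1 + t • z.2))) ((gaussianCov d a).prod ν) := i2.sub i3
    rw [integral_sub i5 i4, integral_sub i2 i3, z4, sub_zero]
  change ‖∫ z : Ed d × Ed d, u (z.1 + (t + h) • z.2) ∂((gaussianCov d a).prod ν)
      - ∫ z : Ed d × Ed d, u ((z.1 + t • z.2) + h • v (z.1 + t • z.2)) ∂((gaussianCov d a).prod ν)‖ ≤ _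
  rw [e]
  have key : ∀ᵐ z ∂((gaussianCov d a).prod ν),
      ‖u (z.1 + (t + h) • z.2) - u ((z.1 + t • z.2) + h • v (z.1 + t • z.2))
        - h • fderiv ℝ u (z.1 + t • z.2) (z.2 - v (z.1 + t • z.2))‖ ≤ 2 * L * R ^ 2 * h ^ 2 := by
    filter_upwards [ae_snd hR] with z hz
    set X := z.1 + t • z.2 with hX
    have eX : z.1 + (t + h) • z.2 = X + h • z.2 := by rw [hX, add_smul, add_assoc]
    rw [eX]
    have t1 := UU_taylor hL hu X (h • z.2)
    have t2 := UU_taylor hL hu X (h • v X)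
    have n (y : Ed d) (hy : ‖y‖ ≤ R) : L * ‖h • y‖ ^ 2 ≤ L * R ^ 2 * h ^ 2 := by
      rw [norm_smul, Real.norm_of_nonneg hh, mul_pow]
      have : ‖y‖ ^ 2 ≤ R ^ 2 := by gcongr
      calc _ ≤ L * (h ^ 2 * R ^ 2) := by gcongr
        _ = _ := by ring
    have e2 : u (X + h • z.2) - u (X + h • v X) - h • fderiv ℝ u X (z.2 - v X)
        = (u (X + h • z.2) - u X - fderiv ℝ u X (h • z.2))
          - (u (X + h • v X) - u X - fderiv ℝ u X (h • v X)) := by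
      rw [map_sub, map_smul, map_smul, smul_sub]; abel
    rw [e2]
    refine (norm_sub_le _ _).trans ?_
    have n1 := n _ hz
    have n2 := n _ (hvb X)
    linarith
  simpa using norm_integral_le_of_norm_le_const key
end
end TG

namespace TG
open Filter Topology
open scoped RealInnerProductSpace

section
variable {d : ℕ}

/-- Euler scheme -/
def ph (ν : Measure (Ed d)) (a : ℝ) (n : ℕ) : ℕ → Ed d → Ed d
  | 0 => id
  | k + 1 => T (rh ν a (k / n)) (k / n / a) (1 / n) ∘ ph ν a n k

lemma ph_lip {ν : Measure (Ed d)} [IsProbabilityMeasure ν] {a R : ℝ} (ha : 0 < a)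
    (hR : ∀ᵐ y ∂ν, ‖y‖ ≤ R) (hR0 : 0 ≤ R) (n : ℕ) (hn : 0 < n) (k : ℕ) (x x' : Ed d) :
    ‖ph ν a n k x - ph ν a n k x'‖ ≤ Real.exp (R ^ 2 * k ^ 2 / (2 * a * n ^ 2)) * ‖x - x'‖ := by
  induction k with
  | zero => simp [ph]
  | succ k ih =>
    have hn' : (0:ℝ) < n := by exact_mod_cast hn
    have hQ := rh_prob (ν := ν) (t := (k:ℝ) / n) ha
    have h := T_lip (ρ := rh ν a (k / n)) (s := k / n / a) (h := 1 / n) (by positivity)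
      (rh_ae hR) hR0 (by positivity) (ph ν a n k x) (ph ν a n k x')
    have p : (0:ℝ) ≤ 1 + 1 / n * (k / n / a * R ^ 2) := by positivity
    refine h.trans ((mul_le_mul_of_nonneg_left ih p).trans ?_)
    rw [← mul_assoc]
    refine mul_le_mul_of_nonneg_right ?_ (norm_nonneg _)
    have h2 := Real.add_one_le_exp (1 / (n:ℝ) * (k / n / a * R ^ 2))
    calc _ ≤ Real.exp (1 / (n:ℝ) * (k / n / a * R ^ 2)) * Real.exp (R ^ 2 * k ^ 2 / (2 * a * n ^ 2)) := by
          gcongr; linarith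
      _ = Real.exp (R ^ 2 * (k ^ 2 + 2 * k) / (2 * a * n ^ 2)) := by
          rw [← Real.exp_add]; congr 1; field_simp; ring
      _ ≤ _ := by
          push_cast
          gcongr
          nlinarith

lemma ph_bd {ν : Measure (Ed d)} [IsProbabilityMeasure ν] {a R : ℝ} (ha : 0 < a)
    (hR : ∀ᵐ y ∂ν, ‖y‖ ≤ R) (n : ℕ) (hn : 0 < n) (k : ℕ) (x : Ed d) :
    ‖ph ν a n k x‖ ≤ ‖x‖ + k / n * R := by
  induction k with
  | zero => simp [ph]
  | succ k ih =>
    have hn' : (0:ℝ) < n := by exact_mod_cast hn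
    have hQ := rh_prob (ν := ν) (t := (k:ℝ) / n) ha
    have h := vel_norm (ρ := rh ν a (k / n)) (s := k / n / a) (by positivity) (rh_ae hR) (ph ν a n k x)
    change ‖ph ν a n k x + (1 / (n:ℝ)) • vel (rh ν a (k / n)) (k / n / a) (ph ν a n k x)‖ ≤ _
    refine (norm_add_le _ _).trans ?_
    rw [norm_smul, Real.norm_of_nonneg (by positivity)]
    have h3 : 1 / (n:ℝ) * ‖vel (rh ν a (k / n)) (k / n / a) (ph ν a n k x)‖ ≤ 1 / n * R := by gcongr
    push_cast
    have e : ((k:ℝ) + 1) / n * R = k / n * R + 1 / n * R := by ring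
    linarith

lemma tele {ν : Measure (Ed d)} [IsProbabilityMeasure ν] {a R : ℝ} (ha : 0 < a)
    (hR : ∀ᵐ y ∂ν, ‖y‖ ≤ R) (hR0 : 0 ≤ R) (n : ℕ) (hn : 0 < n) {β : ℝ}
    (hβ : β = 2 * (1 / a * R ^ 2) + (1 / a * R ^ 2) ^ 2 + 4 * (1 / a) ^ 2 * R ^ 3)
    (k : ℕ) (hk : k ≤ n) : ∀ (L : ℝ) (_ : 0 ≤ L) (u : Ed d → ℂ) (_ : UU L u),
    ‖EA ν a u (k / n) - EA ν a (u ∘ ph ν a n k) 0‖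
      ≤ k * (2 * (L * (1 + 1 / n * β) ^ k) * R ^ 2 * (1 / n) ^ 2) := by
  have hn' : (0:ℝ) < n := by exact_mod_cast hn
  have hβ0 : 0 ≤ β := by rw [hβ]; positivity
  induction k with
  | zero => intro L hL u hu; simp [ph]
  | succ k ih =>
    intro L hL u hu
    have hQ := rh_prob (ν := ν) (t := (k:ℝ) / n) ha
    have h1 := one_step (t := (k:ℝ) / n) (h := 1 / n) ha (by positivity) hR hR0 hL (by positivity) hu
    have hkn : (k:ℝ) / n ≤ 1 := by
      rw [div_le_one hn']; exact_mod_cast (Nat.le_of_succ_le hk)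
    have hu2 := UU_comp (ρ := rh ν a (k / n)) (s := k / n / a) (S := 1 / a) (h := 1 / n)
      (by positivity) (by gcongr) (rh_ae hR) hR0 (by positivity)
      (by rw [div_le_one hn']; exact_mod_cast hn) hL hu
    rw [← hβ] at hu2
    have h2 := ih (Nat.le_of_succ_le hk) _ (by positivity) _ hu2
    have e1 : ((k + 1 : ℕ) : ℝ) / n = k / n + 1 / n := by push_cast; ring
    rw [e1]
    have e2 : u ∘ ph ν a n (k + 1) = (u ∘ T (rh ν a (k / n)) (k / n / a) (1 / n)) ∘ ph ν a n k := rfl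
    rw [e2]
    refine (norm_sub_le_norm_sub_add_norm_sub _ _ _).trans ((add_le_add h1 h2).trans ?_)
    have hp : (1:ℝ) ≤ (1 + 1 / n * β) ^ (k + 1) := one_le_pow₀ (by
      have : 0 ≤ 1 / n * β := by positivity
      linarith)
    have h3 : 2 * L * R ^ 2 * (1 / (n:ℝ)) ^ 2 ≤
        2 * (L * (1 + 1 / n * β) ^ (k + 1)) * R ^ 2 * (1 / n) ^ 2 := by
      have : L ≤ L * (1 + 1 / n * β) ^ (k + 1) := le_mul_of_one_le_right hL hp
      gcongr
    push_cast
    have e3 : (1 + 1 / (n:ℝ) * β) ^ (k + 1) = (1 + 1 / n * β) * (1 + 1 / n * β) ^ k := pow_succ' _ _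
    rw [e3] at h3 ⊢
    linarith [h3]

lemma tele_n {ν : Measure (Ed d)} [IsProbabilityMeasure ν] {a R : ℝ} (ha : 0 < a)
    (hR : ∀ᵐ y ∂ν, ‖y‖ ≤ R) (hR0 : 0 ≤ R) {L : ℝ} (hL : 0 ≤ L) {u : Ed d → ℂ} (hu : UU L u) :
    ∃ C : ℝ, ∀ n : ℕ, 0 < n → ‖EA ν a u 1 - EA ν a (u ∘ ph ν a n n) 0‖ ≤ C / n := by
  set β := 2 * (1 / a * R ^ 2) + (1 / a * R ^ 2) ^ 2 + 4 * (1 / a) ^ 2 * R ^ 3 with hβ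
  have hβ0 : 0 ≤ β := by positivity
  refine ⟨2 * (L * Real.exp β) * R ^ 2, fun n hn => ?_⟩
  have hn' : (0:ℝ) < n := by exact_mod_cast hn
  have h := tele ha hR hR0 n hn hβ n le_rfl L hL u hu
  rw [div_self hn'.ne'] at h
  refine h.trans ?_
  have h1 : (1 + 1 / n * β) ^ n ≤ Real.exp β := by
    have h2 := Real.add_one_le_exp (1 / (n:ℝ) * β)
    calc _ ≤ Real.exp (1 / (n:ℝ) * β) ^ n := by
          apply pow_le_pow_left₀ (by positivity); linarith
      _ = _ := by rw [← Real.exp_nat_mul]; congr 1; field_simp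
  calc _ ≤ (n:ℝ) * (2 * (L * Real.exp β) * R ^ 2 * (1 / n) ^ 2) := by gcongr
    _ = _ := by field_simp

lemma exists_lim {K R : ℝ} (hK : 0 ≤ K) (f : ℕ → Ed d → Ed d)
    (hf : ∀ n x x', ‖f n x - f n x'‖ ≤ K * ‖x - x'‖) (hb : ∀ n x, ‖f n x‖ ≤ ‖x‖ + R) :
    ∃ (σ : ℕ → ℕ) (φ : Ed d → Ed d), StrictMono σ ∧ (∀ x x', ‖φ x - φ x'‖ ≤ K * ‖x - x'‖) ∧
      ∀ x, Tendsto (fun n => f (σ n) x) atTop (𝓝 (φ x)) := by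
  set e := TopologicalSpace.denseSeq (Ed d)
  have hc : IsCompact (Set.pi univ (fun j : ℕ => Metric.closedBall (0 : Ed d) (‖e j‖ + R))) :=
    isCompact_univ_pi fun j => isCompact_closedBall _ _
  obtain ⟨l, -, σ, hσ, hl⟩ := hc.tendsto_subseq (x := fun n j => f n (e j)) (fun n j _ => by
    simpa using hb n (e j))
  rw [tendsto_pi_nhds] at hl
  have hcau : ∀ x, CauchySeq (fun n => f (σ n) x) := by
    intro x
    rw [Metric.cauchySeq_iff']
    intro ε hε
    obtain ⟨j, hj⟩ := (TopologicalSpace.denseRange_denseSeq (Ed d)).exists_dist_lt x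
      (ε := ε / (3 * (K + 1))) (by positivity)
    obtain ⟨N, hN⟩ := Metric.cauchySeq_iff'.1 (hl j).cauchySeq (ε / 3) (by positivity)
    refine ⟨N, fun n hn => ?_⟩
    have h1 := hN n hn
    simp only [Function.comp] at h1
    have h2 (m : ℕ) : dist (f m x) (f m (e j)) ≤ ε / 3 := by
      rw [dist_eq_norm]
      refine (hf m _ _).trans ?_
      rw [← dist_eq_norm]
      calc _ ≤ (K + 1) * (ε / (3 * (K + 1))) :=
            mul_le_mul (by linarith) hj.le dist_nonneg (by positivity)
        _ = _ := by field_simp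
    have h3 := h2 (σ n)
    have h4 := h2 (σ N)
    rw [dist_comm] at h4
    have := dist_triangle4 (f (σ n) x) (f (σ n) (e j)) (f (σ N) (e j)) (f (σ N) x)
    linarith
  choose φ hφ using fun x => cauchySeq_tendsto_of_complete (hcau x)
  refine ⟨σ, φ, hσ, fun x x' => ?_, hφ⟩
  exact le_of_tendsto ((hφ x).sub (hφ x')).norm (Eventually.of_forall fun n => hf _ x x')

lemma UU_char (ξ : Ed d) :
    UU (‖ξ‖ + ‖ξ‖ ^ 2) (fun x : Ed d => Complex.exp (⟪x, ξ⟫ * Complex.I)) := by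
  have hn (x : Ed d) : ‖Complex.exp (⟪x, ξ⟫ * Complex.I)‖ = 1 := Complex.norm_exp_ofReal_mul_I _
  have hD (x : Ed d) : HasFDerivAt (fun x : Ed d => Complex.exp (⟪x, ξ⟫ * Complex.I))
      (op ξ (Complex.exp (⟪x, ξ⟫ * Complex.I) * Complex.I)) x := by
    have h1 : HasFDerivAt (fun x : Ed d => ((⟪x, ξ⟫ : ℝ) : ℂ) * Complex.I) (op ξ Complex.I) x := by
      have := (op ξ Complex.I).hasFDerivAt (x := x)
      refine this.congr_of_eventuallyEq (Eventually.of_forall fun z => ?_)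
      simp [real_inner_comm]
    refine h1.cexp.congr_fderiv ?_
    ext p
    simp
    ring
  have hbd (x : Ed d) : ‖fderiv ℝ (fun x : Ed d => Complex.exp (⟪x, ξ⟫ * Complex.I)) x‖ = ‖ξ‖ := by
    rw [(hD x).fderiv, op_norm, norm_mul, hn]; simp
  refine ⟨fun x => (hD x).differentiableAt, fun x => ?_, fun x x' => ?_, fun x => (hn x).le⟩
  · rw [hbd]
    have := sq_nonneg ‖ξ‖
    linarith
  · rw [(hD x).fderiv, (hD x').fderiv, ← op_sub_r, op_norm, ← sub_mul, norm_mul, Complex.norm_I,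
      mul_one]
    have : ‖Complex.exp (⟪x, ξ⟫ * Complex.I) - Complex.exp (⟪x', ξ⟫ * Complex.I)‖ ≤ ‖ξ‖ * ‖x - x'‖ :=
      convex_univ.norm_image_sub_le_of_norm_fderiv_le (𝕜 := ℝ)
        (f := fun x : Ed d => Complex.exp (⟪x, ξ⟫ * Complex.I))
        (fun z _ => (hD z).differentiableAt) (fun z _ => (hbd z).le) (mem_univ _) (mem_univ _)
    have h2 := mul_le_mul_of_nonneg_left this (norm_nonneg ξ)
    have := mul_nonneg (norm_nonneg ξ) (norm_nonneg (x - x'))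
    nlinarith

lemma scale_int {a : ℝ} (ha : 0 < a) (f : Ed d → ℂ) :
    ∫ x, f (Real.sqrt a • x) ∂(stdGaussian d) = ∫ x, f x ∂(gaussianCov d a) := by
  have hs := Real.sqrt_pos.2 ha
  rw [std_eq, gc_integral one_pos, gc_integral ha]
  have h := Measure.integral_comp_smul (volume : Measure (Ed d))
    (fun z => gp 1 ((Real.sqrt a)⁻¹ • z) • f z) (Real.sqrt a)
  simp only [inv_smul_smul₀ hs.ne'] at h
  rw [h, ← integral_smul]
  congr 1; ext1 z
  rw [smul_smul]
  congr 1
  unfold gp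
  rw [finrank_euclideanSpace_fin, abs_of_pos (by positivity), norm_smul, norm_inv,
    Real.norm_of_nonneg hs.le, mul_pow, inv_pow, Real.sq_sqrt ha.le, ← mul_assoc]
  congr 1
  · have h2 : (Real.sqrt a ^ d)⁻¹ = a ^ (-(d:ℝ) / 2) := by
      rw [Real.sqrt_eq_rpow, ← Real.rpow_natCast, ← Real.rpow_mul ha.le, ← Real.rpow_neg ha.le]
      congr 1; ring
    rw [h2, mul_one, Real.mul_rpow (by positivity) ha.le, mul_comm]
  · congr 1
    field_simp

lemma ae_of_support {ν : Measure (Ed d)} {R : ℝ}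
    (hν : msupport ν ⊆ Metric.closedBall 0 R) : ∀ᵐ y ∂ν, ‖y‖ ≤ R := by
  rw [ae_iff]
  apply measure_null_of_locally_null
  intro x hx
  have : x ∉ msupport ν := fun h => hx (by simpa using hν h)
  simp only [msupport, mem_setOf_eq, not_forall, not_not] at this
  obtain ⟨U, hU, hxU, h0⟩ := this
  exact ⟨U, mem_nhdsWithin_of_mem_nhds (hU.mem_nhds hxU), h0⟩

end
end TG

open Filter Topology TG in
/-- For `a > 0` and `ν` supported in a ball of radius `R`, there is a
`√a·e^{R²/(2a)}`-Lipschitz map pushing the standard Gaussian forward to `γ_d^a ⋆ ν`. -/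
theorem transport_scaled_gaussian_mixture
    (d : ℕ) (a R : ℝ) (ha : 0 < a) (ν : Measure (Ed d)) [IsProbabilityMeasure ν]
    (hν : msupport ν ⊆ Metric.closedBall 0 R) :
    ∃ φ : Ed d → Ed d,
      LipschitzWith (Real.toNNReal (Real.sqrt a * Real.exp (R ^ 2 / (2 * a)))) φ ∧
      Measure.map φ (stdGaussian d) = mconv (gaussianCov d a) ν := by
  have hR := ae_of_support hν
  have hR0 : 0 ≤ R := by
    obtain ⟨y, hy⟩ := hR.exists
    exact (norm_nonneg y).trans hy
  have hP := gc_prob (d := d) ha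
  have hP1 : IsProbabilityMeasure (stdGaussian d) := by rw [std_eq]; exact gc_prob one_pos
  obtain ⟨σ, φ, hσ, hφl, hφ⟩ := exists_lim (K := Real.exp (R ^ 2 / (2 * a))) (R := R)
    (Real.exp_pos _).le (fun n => ph ν a (n + 1) (n + 1))
    (fun n x x' => by
      have h := ph_lip ha hR hR0 (n + 1) n.succ_pos (n + 1) x x'
      have e : R ^ 2 * ((n + 1 : ℕ) : ℝ) ^ 2 / (2 * a * ((n + 1 : ℕ) : ℝ) ^ 2) = R ^ 2 / (2 * a) := by
        have : ((n + 1 : ℕ) : ℝ) ≠ 0 := by positivity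
        field_simp
      rwa [e] at h)
    (fun n x => by
      have h := ph_bd ha hR (n + 1) n.succ_pos (n + 1) x
      have : ((n + 1 : ℕ) : ℝ) ≠ 0 := by positivity
      rwa [div_self this, one_mul] at h)
  have hφc : Continuous φ := by
    have : LipschitzWith (Real.exp (R ^ 2 / (2 * a))).toNNReal φ := by
      apply LipschitzWith.of_dist_le_mul
      intro x y
      rw [dist_eq_norm, dist_eq_norm, Real.coe_toNNReal _ (Real.exp_pos _).le]
      exact hφl x y
    exact this.continuous
  have hψc : Continuous (fun x => φ (Real.sqrt a • x)) := hφc.comp (continuous_const_smul _)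
  refine ⟨fun x => φ (Real.sqrt a • x), ?_, ?_⟩
  · apply LipschitzWith.of_dist_le_mul
    intro x y
    rw [dist_eq_norm, dist_eq_norm, Real.coe_toNNReal _ (by positivity)]
    refine (hφl _ _).trans (le_of_eq ?_)
    rw [← smul_sub, norm_smul, Real.norm_of_nonneg (Real.sqrt_nonneg a)]
    ring
  · have hfin : IsFiniteMeasure (mconv (gaussianCov d a) ν) := by
      unfold mconv; infer_instance
    apply Measure.ext_of_charFun
    ext ξ
    rw [charFun_apply, charFun_apply]
    set u : Ed d → ℂ := fun x => Complex.exp ((inner ℝ x ξ : ℝ) * Complex.I) with hu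
    have hU : UU (‖ξ‖ + ‖ξ‖ ^ 2) u := UU_char ξ
    change ∫ x, u x ∂_ = ∫ x, u x ∂_
    rw [integral_map hψc.aemeasurable hU.cont.aestronglyMeasurable,
      scale_int ha (fun x => u (φ x)), mconv, integral_map (by fun_prop) hU.cont.aestronglyMeasurable]
    have e1 : ∫ z : Ed d × Ed d, u (z.1 + z.2) ∂((gaussianCov d a).prod ν) = EA ν a u 1 := by
      simp [EA]
    rw [e1]
    have e0 (g : Ed d → ℂ) : EA ν a g 0 = ∫ x, g x ∂(gaussianCov d a) := by
      have := integral_fun_fst (μ := gaussianCov d a) (ν := ν) g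
      simpa [EA] using this
    obtain ⟨C, hC⟩ := tele_n ha hR hR0 (by positivity) hU
    have hcont (n : ℕ) : Continuous (ph ν a (n + 1) (n + 1)) := by
      have : LipschitzWith (Real.toNNReal (Real.exp (R ^ 2 * ((n + 1 : ℕ) : ℝ) ^ 2 / (2 * a * ((n + 1 : ℕ) : ℝ) ^ 2)))) (ph ν a (n + 1) (n + 1)) := by
        apply LipschitzWith.of_dist_le_mul
        intro x y
        rw [dist_eq_norm, dist_eq_norm, Real.coe_toNNReal _ (Real.exp_pos _).le]
        exact ph_lip ha hR hR0 (n + 1) n.succ_pos (n + 1) x y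
      exact this.continuous
    have l1 : Tendsto (fun n => ∫ x, u (ph ν a (σ n + 1) (σ n + 1) x) ∂(gaussianCov d a)) atTop
        (𝓝 (∫ x, u (φ x) ∂(gaussianCov d a))) := by
      apply tendsto_integral_of_dominated_convergence (fun _ => (1:ℝ))
      · exact fun n => (hU.cont.comp (hcont _)).aestronglyMeasurable
      · exact integrable_const _
      · exact fun n => Eventually.of_forall fun x => hU.nb _
      · exact Eventually.of_forall fun x => (hU.cont.tendsto _).comp (hφ x)
    have l2 : Tendsto (fun n : ℕ => EA ν a (u ∘ ph ν a (n + 1) (n + 1)) 0) atTop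
        (𝓝 (EA ν a u 1)) := by
      rw [tendsto_iff_norm_sub_tendsto_zero]
      have l3 : Tendsto (fun n : ℕ => C / ((n + 1 : ℕ) : ℝ)) atTop (𝓝 0) :=
        (tendsto_const_div_atTop_nhds_zero_nat C).comp (tendsto_add_atTop_nat 1)
      refine squeeze_zero (fun _ => norm_nonneg _) (fun n => ?_) l3
      rw [norm_sub_rev]
      exact hC (n + 1) n.succ_pos
    have l4 := l2.comp hσ.tendsto_atTop
    refine tendsto_nhds_unique l1 (l4.congr fun n => ?_)
    simp only [Function.comp_def, e0]
end
end
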